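/- arXiv:2512.21498 — 10 statements merged into one kernel-verified Lean document; each statement's English description precedes it below -/
import Mathlib

section
/- Let f and f_k (k ∈ ℕ) be entire functions, each having infinitely many zeros, all of which are simple, and suppose f_k → f uniformly on every compact subset of ℂ. Then for every continuous compactly supported φ : ℂ → ℝ, the finite sums satisfy ∑_{a ∈ f_k⁻¹(0)} φ(a) → ∑_{a ∈ f⁻¹(0)} φ(a) as k → ∞. (Here each zero set f_k⁻¹(0) and f⁻¹(0) is a countably infinite locally finite subset of ℂ, so each sum has finitely many nonzero terms.) -/
open Filter

/-!
By locally uniform convergence no zero of `f_k` stays near a point where `f` does not vanish. Near a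
simple zero `a` of `f`, Cauchy's estimates make the derivatives of the `f_k` uniformly close to the
invertible linear map `f' a`, so the quantitative inverse function theorem gives each `f_k`
exactly one zero `ζ_k` there, and `ζ_k → a`. By compactness of the support of `φ`, the sums over the
zeros of `f_k` are eventually finite sums of values `φ (ζ_k)`, one for each zero of `f` in the
support, and each term converges by continuity of `φ`.
-/

open Metric Set
open scoped Topology NNReal

section SimpleLimit

variable {ι X M : Type*} [TopologicalSpace X] {l : Filter ι} {Z : ι → Set X} {a : X}

/-- The point `a` is a simple limit of the sets `Z i` along `l`: in some neighbourhood of `a` the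
set `Z i` eventually consists of a single point, and this point tends to `a`. The product filter
`l ×ˢ 𝓝 a` provides the neighbourhood, which does not depend on `i`. It is the mode of convergence
of the zero sets of functions near a simple zero of their limit. -/
def IsSimpleLimit (l : Filter ι) (Z : ι → Set X) (a : X) : Prop :=
  ∃ ζ : ι → X, Tendsto ζ l (𝓝 a) ∧ ∀ᶠ p in l ×ˢ 𝓝 a, p.2 ∈ Z p.1 ↔ p.2 = ζ p.1

theorem eventually_injOn_of_tendsto_nhds [T2Space X] {ζ : X → ι → X} {S : Set X} (hS : S.Finite)
    (hζ : ∀ a ∈ S, Tendsto (ζ a) l (𝓝 a)) : ∀ᶠ i in l, InjOn (ζ · i) S := by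
  have hne : ∀ a ∈ S, ∀ b ∈ S, ∀ᶠ i in l, ζ a i = ζ b i → a = b := fun a ha b hb ↦ by
    rcases eq_or_ne a b with rfl | hab
    · exact .of_forall fun _ _ ↦ rfl
    · filter_upwards [((hζ a ha).prodMk_nhds (hζ b hb)).eventually
        (isClosed_diagonal.isOpen_compl.mem_nhds (x := (a, b)) hab)] with i hi heq
      exact absurd heq hi
  have hall := (eventually_all_finite hS).2 fun a ha ↦ (eventually_all_finite hS).2 (hne a ha)
  exact hall.mono fun i hi a ha b hb ↦ hi a ha b hb

theorem tendsto_finsum_mem_of_isSimpleLimit [T2Space X] [AddCommMonoid M] [TopologicalSpace M]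
    [ContinuousAdd M] {S : Finset X} {φ : X → M} (hφ : Continuous φ) (hφc : HasCompactSupport φ)
    (hS : ∀ a ∈ S, IsSimpleLimit l Z a)
    (hZ : ∀ x ∈ tsupport φ, x ∉ S → ∀ᶠ p in l ×ˢ 𝓝 x, p.2 ∉ Z p.1) :
    Tendsto (fun i ↦ ∑ᶠ x ∈ Z i, φ x) l (𝓝 (∑ a ∈ S, φ a)) := by
  classical
  rcases isEmpty_or_nonempty X with _ | _
  · simp [S.eq_empty_of_isEmpty, finsum_of_isEmpty, tendsto_const_nhds]
  choose! ζ hζ hZζ using hS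
  have hζZ : ∀ᶠ i in l, ∀ a ∈ S, ζ a i ∈ Z i := (Finset.eventually_all S).2 fun a ha ↦
    ((tendsto_id.prodMk (hζ a ha)).eventually (hZζ a ha)).mono fun _ h ↦ h.2 rfl
  have hsub : ∀ᶠ i in l, ∀ x ∈ tsupport φ, x ∈ Z i → ∃ a ∈ S, ζ a i = x := by
    have hlocal : ∀ x ∈ tsupport φ, ∀ᶠ p in l ×ˢ 𝓝 x, p.2 ∈ Z p.1 → ∃ a ∈ S, ζ a p.1 = p.2 :=
      fun x hx ↦ by
        by_cases hxS : x ∈ S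
        · exact (hZζ x hxS).mono fun p hp hpZ ↦ ⟨x, hxS, (hp.1 hpZ).symm⟩
        · exact (hZ x hx hxS).mono fun p hp hpZ ↦ absurd hpZ hp
    exact (Eventually.curry (hφc.mem_prod_nhdsSet_of_forall hlocal)).mono
      fun _ h ↦ h.self_of_nhdsSet
  have hsum : ∀ᶠ i in l, ∑ a ∈ S, φ (ζ a i) = ∑ᶠ x ∈ Z i, φ x := by
    filter_upwards [hζZ, hsub, eventually_injOn_of_tendsto_nhds S.finite_toSet hζ]
      with i hmem hex hinj
    rw [← Finset.sum_image hinj, finsum_mem_eq_sum_of_subset]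
    · rintro x ⟨hxZ, hxφ⟩
      simpa using hex x (subset_tsupport φ hxφ) hxZ
    · simpa [Set.subset_def] using hmem
  exact (tendsto_finsetSum S fun a ha ↦ (hφ.tendsto a).comp (hζ a ha)).congr' hsum

end SimpleLimit

section InverseFunction

variable {ι 𝕜 E G : Type*} [NontriviallyNormedField 𝕜] [NormedAddCommGroup E] [NormedSpace 𝕜 E]
  [NormedAddCommGroup G] [NormedSpace 𝕜 G] {l : Filter ι} {F : ι → E → G} {a : E}

theorem exists_eventually_approximatesLinearOn [IsRCLikeNormedField 𝕜] {L : E →L[𝕜] G}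
    (hd : ∀ᶠ p in l ×ˢ 𝓝 a, DifferentiableAt 𝕜 (F p.1) p.2)
    (hL : Tendsto (fun p : ι × E ↦ fderiv 𝕜 (F p.1) p.2) (l ×ˢ 𝓝 a) (𝓝 L))
    {c : ℝ≥0} (hc : 0 < c) :
    ∃ r > 0, ∀ᶠ i in l, ApproximatesLinearOn (F i) L (closedBall a r) c := by
  let : RCLike 𝕜 := IsRCLikeNormedField.rclike 𝕜
  let : NormedSpace ℝ E := .restrictScalars ℝ 𝕜 E
  have hclose : ∀ᶠ p in l ×ˢ 𝓝 a, DifferentiableAt 𝕜 (F p.1) p.2 ∧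
      ‖fderiv 𝕜 (F p.1) p.2 - L‖ ≤ c :=
    hd.and ((hL.eventually (closedBall_mem_nhds L hc)).mono fun _ ↦ mem_closedBall_iff_norm.1)
  obtain ⟨⟨s, r⟩, ⟨hs, hr⟩, hball⟩ :=
    (l.basis_sets.prod nhds_basis_closedBall).eventually_iff.1 hclose
  refine ⟨r, hr, mem_of_superset hs fun i hi x hx y hy ↦ ?_⟩
  exact (convex_closedBall a r).norm_image_sub_le_of_norm_fderiv_le'
    (fun z hz ↦ (hball (mk_mem_prod hi hz)).1) (fun z hz ↦ (hball (mk_mem_prod hi hz)).2) hy hx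

theorem isSimpleLimit_of_approximatesLinearOn [CompleteSpace E] {L : E ≃L[𝕜] G} {c : ℝ≥0}
    (hc : Subsingleton E ∨ c < ‖(L.symm : G →L[𝕜] E)‖₊⁻¹) {r : ℝ} (hr : 0 < r)
    (hF : ∀ᶠ i in l, ApproximatesLinearOn (F i) (L : E →L[𝕜] G) (closedBall a r) c)
    (h0 : Tendsto (fun i ↦ F i a) l (𝓝 0)) :
    IsSimpleLimit l (fun i ↦ {z | F i z = 0}) a := by
  have ha : a ∈ closedBall a r := mem_closedBall_self hr.le
  have hex : ∀ᶠ i in l, ∃ z ∈ closedBall a r, F i z = 0 := by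
    rcases hc with hE | hc
    · have : Subsingleton G := L.symm.injective.subsingleton
      exact .of_forall fun i ↦ ⟨a, ha, Subsingleton.elim _ _⟩
    · have hpos : 0 < ((‖(L.symm : G →L[𝕜] E)‖₊ : ℝ)⁻¹ - c) * r :=
        mul_pos (sub_pos.2 (mod_cast hc)) hr
      filter_upwards [hF, h0.eventually (closedBall_mem_nhds 0 hpos)] with i hi hi0
      exact hi.surjOn_closedBall_of_nonlinearRightInverse L.toNonlinearRightInverse hr.le
        Subset.rfl (mem_closedBall_comm.1 hi0)
  choose! ζ hζ using fun i (h : ∃ z ∈ closedBall a r, F i z = 0) ↦ h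
  refine ⟨ζ, ?_, ?_⟩
  · rw [tendsto_iff_dist_tendsto_zero]
    have hlim : Tendsto (fun i ↦ ((‖(L.symm : G →L[𝕜] E)‖₊⁻¹ - c)⁻¹ : ℝ≥0) * dist 0 (F i a))
        l (𝓝 0) := by
      simpa only [dist_self, mul_zero] using
        ((tendsto_const_nhds (x := (0 : G))).dist h0).const_mul
          ((‖(L.symm : G →L[𝕜] E)‖₊⁻¹ - c)⁻¹ : ℝ≥0).toReal
    refine squeeze_zero' (.of_forall fun _ ↦ dist_nonneg) ?_ hlim
    filter_upwards [hF, hex] with i hi hzero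
    obtain ⟨hmem, hval⟩ := hζ i hzero
    rw [← hval]
    exact (hi.antilipschitz hc).le_mul_dist ⟨ζ i, hmem⟩ ⟨a, ha⟩
  · filter_upwards [(hF.and hex).prod_mk (closedBall_mem_nhds a hr)] with p ⟨⟨hi, hzero⟩, hp⟩
    obtain ⟨hmem, hval⟩ := hζ p.1 hzero
    exact ⟨fun h ↦ hi.injOn hc hp hmem (h.trans hval.symm), fun h ↦ h ▸ hval⟩

theorem isSimpleLimit_of_tendsto_fderiv [IsRCLikeNormedField 𝕜] [CompleteSpace E] (L : E ≃L[𝕜] G)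
    (hd : ∀ᶠ p in l ×ˢ 𝓝 a, DifferentiableAt 𝕜 (F p.1) p.2)
    (hL : Tendsto (fun p : ι × E ↦ fderiv 𝕜 (F p.1) p.2) (l ×ˢ 𝓝 a) (𝓝 (L : E →L[𝕜] G)))
    (h0 : Tendsto (fun i ↦ F i a) l (𝓝 0)) :
    IsSimpleLimit l (fun i ↦ {z | F i z = 0}) a := by
  obtain ⟨c, hc0, hc⟩ : ∃ c : ℝ≥0, 0 < c ∧ (Subsingleton E ∨ c < ‖(L.symm : G →L[𝕜] E)‖₊⁻¹) := by
    rcases L.subsingleton_or_nnnorm_symm_pos with hE | hpos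
    · exact ⟨1, one_pos, .inl hE⟩
    · obtain ⟨c, hc0, hc⟩ := exists_between (inv_pos.2 hpos)
      exact ⟨c, hc0, .inr hc⟩
  obtain ⟨r, hr, hF⟩ := exists_eventually_approximatesLinearOn hd hL hc0
  exact isSimpleLimit_of_approximatesLinearOn hc hr hF h0

end InverseFunction

theorem finite_inter_zeros_of_deriv_ne_zero {𝕜 E : Type*} [NontriviallyNormedField 𝕜]
    [NormedAddCommGroup E] [NormedSpace 𝕜 E] {f : 𝕜 → E} {K : Set 𝕜} (hK : IsCompact K)
    (hf : ContinuousOn f K) (hf' : ∀ z ∈ K, f z = 0 → deriv f z ≠ 0) :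
    (K ∩ {z | f z = 0}).Finite := by
  have hclosed : IsClosed (K ∩ {z | f z = 0}) :=
    hf.preimage_isClosed_of_isClosed hK.isClosed isClosed_singleton
  refine (hK.of_isClosed_subset hclosed inter_subset_left).finite (isDiscrete_iff_nhdsNE.2 ?_)
  rintro z ⟨hzK, hz⟩
  have hz' := hf' z hzK hz
  have hne : ∀ᶠ w in 𝓝[≠] z, f w ≠ 0 :=
    (differentiableAt_of_deriv_ne_zero hz').hasDerivAt.eventually_ne hz'
  rw [← disjoint_iff, disjoint_principal_right]
  exact hne.mono fun w hw hwK ↦ hw hwK.2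

theorem tendsto_prod_nhds_of_tendstoLocallyUniformlyOn {ι α β : Type*} [TopologicalSpace α]
    [UniformSpace β] {l : Filter ι} {F : ι → α → β} {f : α → β} {U : Set α} {a : α}
    (h : TendstoLocallyUniformlyOn F f l U) (hU : U ∈ 𝓝 a) (hf : ContinuousAt f a) :
    Tendsto (fun p : ι × α ↦ F p.1 p.2) (l ×ˢ 𝓝 a) (𝓝 (f a)) := by
  have hfst : TendstoLocallyUniformlyOn (fun p : ι × α ↦ F p.1) f (l ×ˢ 𝓝 a) U :=
    fun u hu x hx ↦ (h u hu x hx).imp fun t ht ↦ ht.imp_right tendsto_fst.eventually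
  refine hfst.tendsto_comp hf.continuousWithinAt (mem_of_mem_nhds hU) ?_
  rw [nhdsWithin_eq_nhds.2 hU]
  exact tendsto_snd

section Holomorphic

variable {ι : Type*} {l : Filter ι} {F : ι → ℂ → ℂ} {f : ℂ → ℂ} {U : Set ℂ}

theorem isSimpleLimit_zeros_of_deriv_ne_zero [l.NeBot] (hU : IsOpen U)
    (hF : ∀ᶠ i in l, DifferentiableOn ℂ (F i) U) (hFf : TendstoLocallyUniformlyOn F f l U) {a : ℂ}
    (haU : a ∈ U) (ha : f a = 0) (ha' : deriv f a ≠ 0) :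
    IsSimpleLimit l (fun i ↦ {z | F i z = 0}) a := by
  have hUa : U ∈ 𝓝 a := hU.mem_nhds haU
  have hcont : ContinuousAt (deriv f) a :=
    ((hFf.differentiableOn hF hU).deriv hU).continuousOn.continuousAt hUa
  refine isSimpleLimit_of_tendsto_fderiv
    (ContinuousLinearEquiv.unitsEquivAut ℂ (Units.mk0 (deriv f a) ha')) ?_ ?_ ?_
  · filter_upwards [hF.prod_mk hUa] with p ⟨hp, hpU⟩
    exact hp.differentiableAt (hU.mem_nhds hpU)
  · have hderiv := tendsto_prod_nhds_of_tendstoLocallyUniformlyOn (hFf.deriv hF hU) hUa hcont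
    have hspan : Tendsto (fun p : ι × ℂ ↦ ContinuousLinearMap.toSpanSingleton ℂ
        (deriv (F p.1) p.2)) (l ×ˢ 𝓝 a) (𝓝 (ContinuousLinearMap.toSpanSingleton ℂ (deriv f a))) :=
      (ContinuousLinearMap.toSpanSingletonCLE (𝕜 := ℂ) (E := ℂ)).continuous.tendsto _ |>.comp hderiv
    exact hspan.congr fun p ↦ toSpanSingleton_deriv
  · exact ha ▸ hFf.tendsto_at haU

theorem zero_set_sums_tendsto_general {M : Type*} [AddCommMonoid M] [TopologicalSpace M]
    [ContinuousAdd M] (hU : IsOpen U) (hF : ∀ᶠ i in l, DifferentiableOn ℂ (F i) U)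
    (hFf : TendstoLocallyUniformlyOn F f l U) {φ : ℂ → M} (hφ : Continuous φ)
    (hφc : HasCompactSupport φ) (hφU : tsupport φ ⊆ U)
    (hf : ∀ z ∈ tsupport φ, f z = 0 → deriv f z ≠ 0) :
    Tendsto (fun i ↦ ∑ᶠ z ∈ {z | F i z = 0}, φ z) l (𝓝 (∑ᶠ z ∈ {z | f z = 0}, φ z)) := by
  rcases l.eq_or_neBot with rfl | _
  · exact tendsto_bot
  have hcont : ContinuousOn f U := (hFf.differentiableOn hF hU).continuousOn
  have hfin := finite_inter_zeros_of_deriv_ne_zero hφc (hcont.mono hφU) hf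
  have hlim : ∑ᶠ z ∈ {z | f z = 0}, φ z = ∑ z ∈ hfin.toFinset, φ z := by
    apply finsum_mem_eq_sum_of_subset
    · rintro z ⟨hz, hzφ⟩
      simpa using ⟨subset_tsupport φ hzφ, hz⟩
    · simp
  rw [hlim]
  refine tendsto_finsum_mem_of_isSimpleLimit hφ hφc ?_ ?_
  · intro a ha
    obtain ⟨haφ, ha0⟩ := hfin.mem_toFinset.1 ha
    exact isSimpleLimit_zeros_of_deriv_ne_zero hU hF hFf (hφU haφ) ha0 (hf a haφ ha0)
  · intro x hx hxS
    have hUx := hU.mem_nhds (hφU hx)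
    have hfx : f x ≠ 0 := fun h ↦ hxS (hfin.mem_toFinset.2 ⟨hx, h⟩)
    exact (tendsto_prod_nhds_of_tendstoLocallyUniformlyOn hFf hUx
      (hcont.continuousAt hUx)).eventually_ne hfx

end Holomorphic

/-- Let `f` and the `f_k` be entire functions, each with infinitely many zeros, all simple,
and suppose `f_k → f` uniformly on every compact subset of `ℂ`.  Then for every continuous
compactly supported `φ : ℂ → ℝ`, the (finitely supported) sums over the zero sets satisfy
`∑_{a ∈ f_k⁻¹(0)} φ(a) → ∑_{a ∈ f⁻¹(0)} φ(a)`. -/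
theorem zero_set_sums_tendsto (f : ℂ → ℂ) (fk : ℕ → ℂ → ℂ)
    (hf : Differentiable ℂ f) (hfk : ∀ k, Differentiable ℂ (fk k))
    (hfz : {z : ℂ | f z = 0}.Infinite) (hfkz : ∀ k, {z : ℂ | fk k z = 0}.Infinite)
    (hfs : ∀ z, f z = 0 → deriv f z ≠ 0)
    (hfks : ∀ k z, fk k z = 0 → deriv (fk k) z ≠ 0)
    (hconv : ∀ K : Set ℂ, IsCompact K → TendstoUniformlyOn fk f atTop K)
    (φ : ℂ → ℝ) (hφc : Continuous φ) (hφs : HasCompactSupport φ) :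
    Tendsto (fun k => ∑ᶠ a ∈ {z : ℂ | fk k z = 0}, φ a) atTop
      (nhds (∑ᶠ a ∈ {z : ℂ | f z = 0}, φ a)) := by
  exact zero_set_sums_tendsto_general isOpen_univ (.of_forall fun k ↦ (hfk k).differentiableOn)
    ((tendstoLocallyUniformlyOn_iff_forall_isCompact isOpen_univ).2 fun K _ hK ↦ hconv K hK)
    hφc hφs (subset_univ _) fun z _ ↦ hfs z
end

section
/- Fix n ≥ 1 and an admissible test family, and equip Conf^lf_∞(ℂ) with the sum metric d_sum. Let Conf_n(ℂ) = {(z_1,…,z_n) ∈ ℂⁿ : z_i ≠ z_j for i ≠ j} with the subspace topology and basepoint (1,2,…,n). For x = (z_1,…,z_n) ∈ Conf_n(ℂ) let R(x) = 1 + max_{1≤j≤n} |z_j|, and define i_n : Conf_n(ℂ) → Conf^lf_∞(ℂ) by i_n(z_1,…,z_n) = (z_1,…,z_n, R(x), R(x)+1, R(x)+2, …). Then i_n is well defined, continuous, sends (1,…,n) to the basepoint Ñ, and the induced homomorphism of fundamental groups (i_n)_* : π₁(Conf_n(ℂ), (1,…,n)) → π₁(Conf^lf_∞(ℂ), Ñ)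 is injective. -/
open scoped Topology
open Filter

noncomputable section

/-- A subset of `ℂ` is locally finite if it meets every compact set in a finite set. -/
def LocFin (A : Set ℂ) : Prop := ∀ K : Set ℂ, IsCompact K → (A ∩ K).Finite

/-- Membership in `C^lf_∞(ℂ)`: countably infinite, locally finite subsets of `ℂ`. -/
def IsClf (A : Set ℂ) : Prop := A.Countable ∧ A.Infinite ∧ LocFin A

/-- An admissible test family `(φ_j)_{j≥1}` (indexed here by `j : ℕ`, with `φ j`
representing `φ_{j+1}`): for every `m ≥ 1` the subfamily of those `φ_j` supported in the
closed ball `K_m` is dense, for the sup norm, in the continuous compactly supported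
functions with support in `K_m`. -/
structure TestFamily where
  φ : ℕ → ℂ → ℝ
  cont : ∀ j, Continuous (φ j)
  cpt : ∀ j, HasCompactSupport (φ j)
  dense : ∀ m : ℕ, 1 ≤ m → ∀ ψ : ℂ → ℝ, Continuous ψ → HasCompactSupport ψ →
      tsupport ψ ⊆ Metric.closedBall (0 : ℂ) (m : ℝ) →
      ∀ ε : ℝ, 0 < ε → ∃ j, tsupport (φ j) ⊆ Metric.closedBall (0 : ℂ) (m : ℝ) ∧
        ∀ z, |φ j z - ψ z| ≤ ε

/-- `S_j(A) = ∑_{a∈A} φ_j(a)` (a sum with finitely many nonzero terms). -/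
def Ssum (T : TestFamily) (j : ℕ) (A : Set ℂ) : ℝ := ∑ᶠ a ∈ A, T.φ j a

/-- The vague metric `d_V(A,B) = ∑_j 2^{-j} |S_j(A)-S_j(B)| / (1+|S_j(A)-S_j(B)|)`. -/
def dV (T : TestFamily) (A B : Set ℂ) : ℝ :=
  ∑' j : ℕ, (1 / 2 : ℝ) ^ (j + 1) *
    (|Ssum T j A - Ssum T j B| / (1 + |Ssum T j A - Ssum T j B|))

/-- Ordered locally finite infinite configurations: injective sequences in `ℂ` with only
finitely many terms in each bounded disk. -/
def IsConf (x : ℕ → ℂ) : Prop :=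
  Function.Injective x ∧ ∀ R : ℝ, 0 < R → {j : ℕ | ‖x j‖ ≤ R}.Finite

/-- The product metric `d_prod(x,y) = ∑_j 2^{-j} min(|x_j - y_j|, 1)`. -/
def dProd (x y : ℕ → ℂ) : ℝ :=
  ∑' j : ℕ, (1 / 2 : ℝ) ^ (j + 1) * min ‖x j - y j‖ 1

/-- The projection `P` to the underlying unordered configuration. -/
def Pmap (x : ℕ → ℂ) : Set ℂ := Set.range x

/-- The sum metric `d_sum(x,y) = d_prod(x,y) + d_V(P(x),P(y))`. -/
def dSum (T : TestFamily) (x y : ℕ → ℂ) : ℝ :=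
  dProd x y + dV T (Pmap x) (Pmap y)

/-- The space `Conf^lf_∞(ℂ)`; the test family is carried as a (phantom) parameter so that
the metric topology of `d_sum` can be installed as a typeclass instance. -/
structure ConfSp (T : TestFamily) where
  seq : ℕ → ℂ
  prop : IsConf seq

/-- The metric topology of `d_sum`: the topology generated by its open balls. -/
instance (T : TestFamily) : TopologicalSpace (ConfSp T) :=
  TopologicalSpace.generateFrom
    {s : Set (ConfSp T) | ∃ (x : ConfSp T) (ε : ℝ), 0 < ε ∧
      s = {y : ConfSp T | dSum T x.seq y.seq < ε}}

/-- The basepoint `Ñ = (1, 2, 3, …)`. -/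
def Ntilde (T : TestFamily) : ConfSp T where
  seq := fun j => (j : ℂ) + 1
  prop := by
    constructor
    · intro a b hab
      have h : ((a : ℂ) + 1) = ((b : ℂ) + 1) := hab
      have h2 : (a : ℂ) = (b : ℂ) := by linear_combination h
      exact_mod_cast h2
    · intro R hR
      apply Set.Finite.subset (Set.finite_Iic (Nat.floor R))
      intro j hj
      simp only [Set.mem_setOf_eq] at hj
      have habs : ‖(j : ℂ) + 1‖ = (j : ℝ) + 1 := by
        rw [show ((j : ℂ) + 1) = (((j : ℝ) + 1 : ℝ) : ℂ) by push_cast; ring]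
        rw [Complex.norm_real, Real.norm_eq_abs, abs_of_nonneg (by positivity)]
      rw [habs] at hj
      have : (j : ℝ) ≤ R := by linarith
      exact Set.mem_Iic.mpr (Nat.le_floor this)

/-- The ordered configuration space `Conf_n(ℂ)` of `n` distinct points of `ℂ`,
with the subspace topology of `ℂⁿ`. -/
abbrev ConfN (n : ℕ) : Type := {z : Fin n → ℂ // Function.Injective z}

/-- `R(x) = 1 + max_j |z_j|`. -/
def Rfun (n : ℕ) (z : Fin n → ℂ) : ℝ := 1 + ⨆ j : Fin n, ‖z j‖

/-- `i_n(z_1,…,z_n) = (z_1,…,z_n, R(x), R(x)+1, R(x)+2, …)`. -/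
def iN (n : ℕ) (z : Fin n → ℂ) : ℕ → ℂ :=
  fun k => if h : k < n then z ⟨k, h⟩ else ((Rfun n z + ((k - n : ℕ) : ℝ) : ℝ) : ℂ)

/-!
The point of `i_n` is that it is a section: forgetting all but the first `n` points of an infinite
configuration is a map `r : Conf^lf_∞(ℂ) → Conf_n(ℂ)` with `r ∘ i_n = id`, and `r` is continuous
because `d_sum` dominates every coordinate. A homotopy between `i_n ∘ γ₀` and `i_n ∘ γ₁` is then
carried by `r` to one between `γ₀` and `γ₁`. Continuity of `i_n` needs, besides that of the
coordinates, that only finitely many points can ever meet a given disk as the finite configuration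
varies: the `k`-th point has norm at least `k - n`. Each `S_j` is therefore locally a finite
sum of continuous functions.
-/

open Function Set

section HomotopyRetract

variable {X Y : Type*} [TopologicalSpace X] [TopologicalSpace Y]

lemma homotopic_of_map_of_leftInverse {f : X → Y} (hf : Continuous f) (r : C(Y, X))
    (hr : LeftInverse r f) {a b : X} {γ₀ γ₁ : Path a b}
    (H : Path.Homotopic (γ₀.map hf) (γ₁.map hf)) : Path.Homotopic γ₀ γ₁ := by
  have retract_map (γ : Path a b) :
      ((γ.map hf).map r.continuous).cast (hr a).symm (hr b).symm = γ := by
    ext t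
    exact hr (γ t)
  rw [← retract_map γ₀, ← retract_map γ₁]
  exact (H.map r).pathCast (hr a).symm (hr b).symm

end HomotopyRetract

lemma pi_norm_eq_iSup {ι : Type*} [Fintype ι] {E : ι → Type*} [∀ i, SeminormedAddGroup (E i)]
    (f : ∀ i, E i) : ‖f‖ = ⨆ i, ‖f i‖ :=
  le_antisymm
    ((pi_norm_le_iff_of_nonneg (Real.iSup_nonneg fun i => norm_nonneg (f i))).2 fun i =>
      le_ciSup (f := fun i => ‖f i‖) (finite_range _).bddAbove i)
    (Real.iSup_le (norm_le_pi_norm f) (norm_nonneg f))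

section WeightedSeries

lemma summable_half_pow_succ_mul {u : ℕ → ℝ} (hu : ∀ j, u j ∈ Icc 0 1) :
    Summable fun j => (1 / 2 : ℝ) ^ (j + 1) * u j :=
  .of_nonneg_of_le (fun j => mul_nonneg (by positivity) (hu j).1)
    (fun j => mul_le_of_le_one_right (by positivity) (hu j).2)
    ((summable_nat_add_iff 1).2 summable_geometric_two)

lemma continuous_tsum_half_pow_succ_mul {X : Type*} [TopologicalSpace X] {u : ℕ → X → ℝ}
    (hc : ∀ j, Continuous (u j)) (hu : ∀ j x, u j x ∈ Icc 0 1) :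
    Continuous fun x => ∑' j, (1 / 2 : ℝ) ^ (j + 1) * u j x := by
  refine continuous_tsum (fun j => (hc j).const_mul _)
    ((summable_nat_add_iff 1).2 summable_geometric_two) fun j x => ?_
  rw [Real.norm_of_nonneg (mul_nonneg (by positivity) (hu j x).1)]
  exact mul_le_of_le_one_right (by positivity) (hu j x).2

lemma min_norm_one_mem_Icc {E : Type*} [SeminormedAddGroup E] (v : E) :
    min ‖v‖ 1 ∈ Icc (0 : ℝ) 1 :=
  ⟨le_min (norm_nonneg v) zero_le_one, min_le_right _ _⟩

lemma abs_div_one_add_abs_mem_Icc (t : ℝ) : |t| / (1 + |t|) ∈ Icc (0 : ℝ) 1 :=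
  ⟨by positivity, div_le_one_of_le₀ (by linarith) (by positivity)⟩

end WeightedSeries

section SumMetric

lemma dSum_self (T : TestFamily) (x : ℕ → ℂ) : dSum T x x = 0 := by
  simp [dSum, dProd, dV]

lemma half_pow_succ_mul_min_le_dProd (x y : ℕ → ℂ) (k : ℕ) :
    (1 / 2 : ℝ) ^ (k + 1) * min ‖x k - y k‖ 1 ≤ dProd x y :=
  (summable_half_pow_succ_mul fun j => min_norm_one_mem_Icc (x j - y j)).le_tsum k fun _ _ => by
    positivity

lemma dV_nonneg (T : TestFamily) (A B : Set ℂ) : 0 ≤ dV T A B :=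
  tsum_nonneg fun _ => by positivity

lemma dProd_le_dSum (T : TestFamily) (x y : ℕ → ℂ) : dProd x y ≤ dSum T x y :=
  le_add_of_nonneg_right (dV_nonneg T _ _)

variable {X : Type*} [TopologicalSpace X]

lemma continuous_Ssum_Pmap (T : TestFamily) (j : ℕ) {y : X → ℕ → ℂ}
    (hc : ∀ k, Continuous fun x => y x k) (hinj : ∀ x, Injective (y x))
    (hlf : ∀ R : ℝ, LocallyFinite fun k => {x | ‖y x k‖ ≤ R}) :
    Continuous fun x => Ssum T j (Pmap (y x)) := by
  obtain ⟨R, hR⟩ := (T.cpt j).isBounded.exists_norm_le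
  have hsupp : LocallyFinite fun k => support fun x => T.φ j (y x k) :=
    (hlf R).subset fun k x hx => hR (y x k) (subset_tsupport _ hx)
  simp only [Ssum, Pmap, finsum_mem_range (hinj _)]
  exact continuous_finsum (fun k => (T.cont j).comp (hc k)) hsupp

lemma continuous_dSum (T : TestFamily) (x₀ : ℕ → ℂ) {y : X → ℕ → ℂ}
    (hc : ∀ k, Continuous fun x => y x k)
    (hS : ∀ j, Continuous fun x => Ssum T j (Pmap (y x))) :
    Continuous fun x => dSum T x₀ (y x) := by
  refine .add (continuous_tsum_half_pow_succ_mul (fun j => ?_) fun j x => min_norm_one_mem_Icc _)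
    (continuous_tsum_half_pow_succ_mul (fun j => ?_) fun j x => abs_div_one_add_abs_mem_Icc _)
  · exact (continuous_const.sub (hc j)).norm.min continuous_const
  · have habs : Continuous fun x => |Ssum T j (Pmap x₀) - Ssum T j (Pmap (y x))| :=
      (continuous_const.sub (hS j)).abs
    exact habs.div (continuous_const.add habs) fun x => by positivity

end SumMetric

attribute [ext] ConfSp

namespace ConfSp

variable {T : TestFamily}

lemma continuous_of_locallyFinite {X : Type*} [TopologicalSpace X] {f : X → ConfSp T}
    (hc : ∀ k, Continuous fun x => (f x).seq k)
    (hlf : ∀ R : ℝ, LocallyFinite fun k => {x | ‖(f x).seq k‖ ≤ R}) : Continuous f := by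
  refine continuous_generateFrom_iff.2 ?_
  rintro _ ⟨x₀, ε, _, rfl⟩
  have hS (j : ℕ) : Continuous fun x => Ssum T j (Pmap (f x).seq) :=
    continuous_Ssum_Pmap T j hc (fun x => (f x).prop.1) hlf
  exact isOpen_lt (continuous_dSum T x₀.seq hc hS) continuous_const

lemma dSum_ball_mem_nhds (x : ConfSp T) {ε : ℝ} (hε : 0 < ε) :
    {y : ConfSp T | dSum T x.seq y.seq < ε} ∈ 𝓝 x :=
  have hopen : IsOpen {y : ConfSp T | dSum T x.seq y.seq < ε} :=
    TopologicalSpace.isOpen_generateFrom_of_mem ⟨x, ε, hε, rfl⟩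
  hopen.mem_nhds ((dSum_self T x.seq).trans_lt hε)

lemma continuous_seq_apply (k : ℕ) : Continuous fun x : ConfSp T => x.seq k := by
  refine continuous_iff_continuousAt.2 fun x => Metric.tendsto_nhds.2 fun ε hε => ?_
  have hδ : 0 < (1 / 2 : ℝ) ^ (k + 1) * min ε 1 := by positivity
  filter_upwards [x.dSum_ball_mem_nhds hδ] with y hy
  have hmin : min ‖x.seq k - y.seq k‖ 1 < min ε 1 :=
    lt_of_mul_lt_mul_left
      (((half_pow_succ_mul_min_le_dProd _ _ k).trans (dProd_le_dSum T _ _)).trans_lt hy)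
      (by positivity)
  rw [dist_comm, dist_eq_norm]
  exact lt_of_not_ge fun hle => hmin.not_ge (min_le_min_right 1 hle)

/-- The projection `Conf^lf_∞(ℂ) → Conf_n(ℂ)` onto the first `n` points. It is the retraction
that inverts `i_n` on the left. -/
def firstPoints (T : TestFamily) (n : ℕ) : C(ConfSp T, ConfN n) where
  toFun x := ⟨fun i => x.seq i, x.prop.1.comp Fin.val_injective⟩
  continuous_toFun :=
    (continuous_pi fun i : Fin n => continuous_seq_apply (i : ℕ)).subtype_mk _

end ConfSp

section Insertion

variable {n : ℕ}

lemma Rfun_eq_one_add_norm (z : Fin n → ℂ) : Rfun n z = 1 + ‖z‖ := by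
  rw [Rfun, pi_norm_eq_iSup]

lemma iN_apply_of_lt (z : Fin n → ℂ) {k : ℕ} (hk : k < n) : iN n z k = z ⟨k, hk⟩ :=
  dif_pos hk

lemma iN_apply_of_le (z : Fin n → ℂ) {k : ℕ} (hk : n ≤ k) :
    iN n z k = ((1 + ‖z‖ + (k - n : ℕ) : ℝ) : ℂ) := by
  rw [iN, dif_neg hk.not_gt, Rfun_eq_one_add_norm]

lemma norm_iN_apply_of_le (z : Fin n → ℂ) {k : ℕ} (hk : n ≤ k) :
    ‖iN n z k‖ = 1 + ‖z‖ + (k - n : ℕ) := by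
  rw [iN_apply_of_le z hk, Complex.norm_of_nonneg (by positivity)]

lemma norm_lt_norm_iN_apply_of_le (z : Fin n → ℂ) {k : ℕ} (hk : n ≤ k) : ‖z‖ < ‖iN n z k‖ := by
  rw [norm_iN_apply_of_le z hk]
  linarith [Nat.cast_nonneg (α := ℝ) (k - n)]

lemma iN_injective {z : Fin n → ℂ} (hz : Injective z) : Injective (iN n z) := by
  have ne_of_lt_of_le {k l : ℕ} (hk : k < n) (hl : n ≤ l) : iN n z k ≠ iN n z l := fun h => by
    refine (norm_lt_norm_iN_apply_of_le z hl).not_ge ?_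
    rw [← h, iN_apply_of_lt z hk]
    exact norm_le_pi_norm z _
  intro k l h
  rcases lt_or_ge k n with hk | hk <;> rcases lt_or_ge l n with hl | hl
  · rw [iN_apply_of_lt z hk, iN_apply_of_lt z hl] at h
    exact congrArg Fin.val (hz h)
  · exact (ne_of_lt_of_le hk hl h).elim
  · exact (ne_of_lt_of_le hl hk h.symm).elim
  · have hnorm := congrArg norm h
    rw [norm_iN_apply_of_le z hk, norm_iN_apply_of_le z hl, add_right_inj, Nat.cast_inj] at hnorm
    lia

lemma locallyFinite_norm_iN_le (R : ℝ) :
    LocallyFinite fun k => {z : Fin n → ℂ | ‖iN n z k‖ ≤ R} := fun z => by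
  refine ⟨univ, univ_mem, (finite_Iic (⌊R⌋₊ + n)).subset ?_⟩
  rintro k ⟨w, hw, -⟩
  rcases lt_or_ge k n with hk | hk
  · exact mem_Iic.2 (by lia)
  · have hR : ((k - n : ℕ) : ℝ) ≤ R := by
      have hw : ‖iN n w k‖ ≤ R := hw
      rw [norm_iN_apply_of_le w hk] at hw
      linarith [norm_nonneg w]
    have := Nat.le_floor hR
    exact mem_Iic.2 (by lia)

lemma isConf_iN {z : Fin n → ℂ} (hz : Injective z) : IsConf (iN n z) :=
  ⟨iN_injective hz, fun R _ => (locallyFinite_norm_iN_le R).point_finite z⟩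

lemma continuous_iN_apply (k : ℕ) : Continuous fun z : Fin n → ℂ => iN n z k := by
  rcases lt_or_ge k n with hk | hk
  · simp only [iN_apply_of_lt _ hk]
    exact continuous_apply _
  · simp only [iN_apply_of_le _ hk]
    fun_prop

lemma pi_norm_natCast_add_one (n : ℕ) : ‖fun i : Fin n => ((i : ℕ) : ℂ) + 1‖ = n := by
  have norm_coord (i : ℕ) : ‖(i : ℂ) + 1‖ = i + 1 := by
    exact_mod_cast Complex.norm_natCast (i + 1)
  refine le_antisymm ((pi_norm_le_iff_of_nonneg n.cast_nonneg).2 fun i => ?_) ?_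
  · rw [norm_coord]
    exact_mod_cast i.2
  · cases n with
    | zero => simp
    | succ m =>
      have hlast := norm_le_pi_norm (fun i : Fin (m + 1) => ((i : ℕ) : ℂ) + 1) (Fin.last m)
      rw [norm_coord] at hlast
      exact_mod_cast hlast

lemma iN_natCast_add_one (n k : ℕ) : iN n (fun i : Fin n => ((i : ℕ) : ℂ) + 1) k = k + 1 := by
  rcases lt_or_ge k n with hk | hk
  · exact iN_apply_of_lt _ hk
  · rw [iN_apply_of_le _ hk, pi_norm_natCast_add_one, Nat.cast_sub hk]
    push_cast
    ring

/-- The map `i_n : Conf_n(ℂ) → Conf^lf_∞(ℂ)`, that is, `iN` with its codomain restricted to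
configurations. -/
def insertion (T : TestFamily) (n : ℕ) (z : ConfN n) : ConfSp T :=
  ⟨iN n z.1, isConf_iN z.2⟩

variable (T : TestFamily)

lemma continuous_insertion (n : ℕ) : Continuous (insertion T n) :=
  ConfSp.continuous_of_locallyFinite (fun k => (continuous_iN_apply k).comp continuous_subtype_val)
    fun R => (locallyFinite_norm_iN_le R).preimage_continuous continuous_subtype_val

lemma insertion_eq_Ntilde {b : ConfN n} (hb : b.1 = fun i : Fin n => ((i : ℕ) : ℂ) + 1) :
    insertion T n b = Ntilde T := by
  ext k
  simp only [insertion, Ntilde, hb, iN_natCast_add_one]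

lemma leftInverse_firstPoints_insertion (n : ℕ) :
    LeftInverse (ConfSp.firstPoints T n) (insertion T n) := fun z =>
  Subtype.ext (funext fun i => iN_apply_of_lt z.1 i.2)

end Insertion

theorem iN_welldefined_continuous_pi1_injective_general (T : TestFamily) (n : ℕ) (hn : 1 ≤ n) :
    ∃ ins : ConfN n → ConfSp T,
      (∀ z : ConfN n, (ins z).seq = iN n z.1) ∧
      (∀ b : ConfN n, b.1 = (fun i : Fin n => ((i : ℕ) : ℂ) + 1) → ins b = Ntilde T) ∧
      ∃ hc : Continuous ins, ∀ {a b : ConfN n} (γ₀ γ₁ : Path a b),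
        Path.Homotopic (γ₀.map hc) (γ₁.map hc) → Path.Homotopic γ₀ γ₁ :=
  ⟨insertion T n, fun _ => rfl, fun _ => insertion_eq_Ntilde T, continuous_insertion T n,
    fun _ _ => homotopic_of_map_of_leftInverse _ _ (leftInverse_firstPoints_insertion T n)⟩

/-- `i_n` is well defined, continuous, sends the basepoint `(1,…,n)` to `Ñ`, and is
injective on fundamental groups: if the images of two loops at the basepoint are
(rel-endpoints) homotopic in `Conf^lf_∞(ℂ)`, then the loops are already homotopic
in `Conf_n(ℂ)`. -/
theorem iN_welldefined_continuous_pi1_injective (T : TestFamily) (n : ℕ) (hn : 1 ≤ n) :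
    ∃ ins : ConfN n → ConfSp T,
      (∀ z : ConfN n, (ins z).seq = iN n z.1) ∧
      ∃ hc : Continuous ins,
        ∀ b : ConfN n, b.1 = (fun i : Fin n => ((i : ℕ) : ℂ) + 1) →
          ins b = Ntilde T ∧
          ∀ γ₀ γ₁ : Path b b,
            Path.Homotopic (γ₀.map hc) (γ₁.map hc) → Path.Homotopic γ₀ γ₁ := by
  obtain ⟨ins, hseq, hbase, hc, hinj⟩ := iN_welldefined_continuous_pi1_injective_general T n hn
  exact ⟨ins, hseq, hc, fun b hb => ⟨hbase b hb, hinj⟩⟩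
end
end

section
/- Fix an admissible test family. Then the metric space (C^lf_∞(ℂ), d_V) is path-connected. -/
open scoped Topology
open Filter

noncomputable section

/-- The space `C^lf_∞(ℂ)`; the test family is carried as a (phantom) parameter so that
the metric topology of `d_V` can be installed as a typeclass instance. -/
structure ClfSp (T : TestFamily) where
  carrier : Set ℂ
  prop : IsClf carrier

/-- The metric topology of `d_V`: the topology generated by its open balls. -/
instance (T : TestFamily) : TopologicalSpace (ClfSp T) :=
  TopologicalSpace.generateFrom
    {s : Set (ClfSp T) | ∃ (A : ClfSp T) (ε : ℝ), 0 < ε ∧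
      s = {B : ClfSp T | dV T A.carrier B.carrier < ε}}

/-!
To join `A` to a larger set `A ∪ C`, dilate `C` from a centre `p ∉ C` by the complex factors
`1 + r * u`, `r ≥ 0`. A test function only ever sees finitely many of the moving points,
so its sum varies continuously, and tends to `0` as `r → ∞` because every moving point escapes to
infinity. Only countably many directions `u` make a moving point hit `A`, so `u` can be chosen to
keep the moving set disjoint from `A`. Finally, `A` and `B` are both joined to `A ∪ B`.
-/

open AffineMap (homothety)
open Bornology (cobounded)
open scoped NNReal

theorem joined_of_tendsto_atTop {X : Type*} [TopologicalSpace X] {f : ℝ≥0 → X} {x : X}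
    (hf : Continuous f) (hx : Tendsto f atTop (𝓝 x)) : Joined x (f 0) := by
  have hcont : ContinuousOn (Function.update (fun s : ℝ ↦ f (s⁻¹ - 1).toNNReal) 0 x)
      unitInterval := by
    refine continuousOn_update_iff.2 ⟨?_, fun _ ↦ ?_⟩
    · have hinv : ContinuousOn (fun s : ℝ ↦ s⁻¹) (unitInterval \ {0}) :=
        continuousOn_inv₀.mono fun s hs ↦ hs.2
      exact hf.comp_continuousOn
        (continuous_real_toNNReal.comp_continuousOn (hinv.sub continuousOn_const))
    · have hpos : unitInterval \ {0} ⊆ Set.Ioi (0 : ℝ) := fun s hs ↦ hs.1.1.lt_of_ne' hs.2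
      have hinv : Tendsto (fun s : ℝ ↦ s⁻¹ - 1) (𝓝[unitInterval \ {0}] 0) atTop :=
        tendsto_atTop_add_const_right _ (-1)
          (tendsto_inv_nhdsGT_zero.mono_left (nhdsWithin_mono 0 hpos))
      exact hx.comp (Real.tendsto_toNNReal_atTop.comp hinv)
  exact ⟨Path.ofLine hcont (by simp) (by simp)⟩

namespace LocFin

variable {A C : Set ℂ}

theorem mono (hC : LocFin C) (h : A ⊆ C) : LocFin A := fun K hK ↦
  (hC K hK).subset (Set.inter_subset_inter_left K h)

theorem union (hA : LocFin A) (hC : LocFin C) : LocFin (A ∪ C) := fun K hK ↦ by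
  rw [Set.union_inter_distrib_right]
  exact (hA K hK).union (hC K hK)

theorem countable (hC : LocFin C) : C.Countable := by
  rw [← Metric.iUnion_inter_closedBall_nat C 0]
  exact Set.countable_iUnion fun n ↦ (hC _ (isCompact_closedBall 0 n)).countable

theorem range_of_isClosedEmbedding {X : Type*} [TopologicalSpace X] [DiscreteTopology X]
    {f : X → ℂ} (hf : Topology.IsClosedEmbedding f) : LocFin (Set.range f) := fun K hK ↦ by
  rw [Set.inter_comm, ← Set.image_preimage_eq_inter_range]
  exact (hf.isCompact_preimage hK).finite_of_discrete.image f

theorem finite_inter_support {E : Type*} [Zero E] {φ : ℂ → E} (hC : LocFin C)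
    (hφ : HasCompactSupport φ) : (C ∩ Function.support φ).Finite :=
  (hC _ hφ).subset (Set.inter_subset_inter_right C (subset_tsupport φ))

theorem finite_setOf_exists_homothety_mem (hC : LocFin C) {K : Set ℂ} (hK : IsCompact K) (p : ℂ)
    {δ : ℝ} (hδ : 0 < δ) : {c ∈ C | ∃ w : ℂ, δ ≤ ‖w‖ ∧ homothety p w c ∈ K}.Finite := by
  obtain ⟨R, hR⟩ := hK.isBounded.subset_closedBall p
  refine (hC _ (isCompact_closedBall p (R / δ))).subset ?_
  rintro c ⟨hc, w, hw, hwc⟩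
  refine ⟨hc, (le_div_iff₀' hδ).2 ?_⟩
  calc δ * dist c p ≤ ‖w‖ * dist p c := by rw [dist_comm c p]; gcongr
    _ = dist (homothety p w c) p := (dist_homothety_center p c w).symm
    _ ≤ R := hR hwc

theorem image_homothety (hC : LocFin C) (p : ℂ) {w : ℂ} (hw : w ≠ 0) :
    LocFin (homothety p w '' C) := fun K hK ↦ by
  refine ((hC.finite_setOf_exists_homothety_mem hK p (norm_pos_iff.2 hw)).image
    (homothety p w)).subset ?_
  rintro _ ⟨⟨c, hc, rfl⟩, hcK⟩
  exact ⟨c, ⟨hc, w, le_rfl, hcK⟩, rfl⟩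

section TestSum

variable {E : Type*} [AddCommMonoid E] {φ : ℂ → E}

theorem exists_finset_finsum_image_homothety (hC : LocFin C) (hφ : HasCompactSupport φ) (p : ℂ)
    {δ : ℝ} (hδ : 0 < δ) :
    ∃ F : Finset ℂ, ↑F ⊆ C ∧ ∀ w : ℂ, δ ≤ ‖w‖ →
      ∑ᶠ z ∈ homothety p w '' C, φ z = ∑ c ∈ F, φ (homothety p w c) := by
  have hfin := hC.finite_setOf_exists_homothety_mem hφ p hδ
  have hsub : (hfin.toFinset : Set ℂ) ⊆ C := by
    rw [hfin.coe_toFinset]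
    exact Set.sep_subset _ _
  refine ⟨hfin.toFinset, hsub, fun w hw ↦ ?_⟩
  have hw0 : w ≠ 0 := norm_pos_iff.1 (hδ.trans_le hw)
  rw [finsum_mem_image (AffineMap.homothety_injective p hw0).injOn]
  refine finsum_mem_eq_sum_of_subset _ ?_ hsub
  rintro c ⟨hc, hφc⟩
  exact hfin.mem_toFinset.2 ⟨hc, w, hw, subset_tsupport φ hφc⟩

variable [TopologicalSpace E] [ContinuousAdd E]

theorem continuousOn_finsum_image_homothety (hC : LocFin C) (hφ : HasCompactSupport φ)
    (hcont : Continuous φ) (p : ℂ) :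
    ContinuousOn (fun w : ℂ ↦ ∑ᶠ z ∈ homothety p w '' C, φ z) {0}ᶜ := by
  intro w hw
  have hw0 : 0 < ‖w‖ := norm_pos_iff.2 hw
  obtain ⟨F, -, hF⟩ := hC.exists_finset_finsum_image_homothety hφ p (half_pos hw0)
  have hsum : Continuous fun v : ℂ ↦ ∑ c ∈ F, φ (homothety p v c) := by
    simp only [AffineMap.homothety_apply]
    fun_prop
  have hnear : ∀ᶠ v in 𝓝 w, ‖w‖ / 2 ≤ ‖v‖ :=
    continuous_norm.continuousAt.eventually (le_mem_nhds (half_lt_self hw0))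
  exact (hsum.continuousAt.congr (hnear.mono fun v hv ↦ (hF v hv).symm)).continuousWithinAt

theorem tendsto_finsum_image_homothety_cobounded (hC : LocFin C) (hφ : HasCompactSupport φ)
    {p : ℂ} (hp : p ∉ C) :
    Tendsto (fun w : ℂ ↦ ∑ᶠ z ∈ homothety p w '' C, φ z) (cobounded ℂ) (𝓝 0) := by
  obtain ⟨F, hFC, hF⟩ := hC.exists_finset_finsum_image_homothety hφ p one_pos
  have hescape : ∀ c ∈ F, Tendsto (fun w : ℂ ↦ homothety p w c) (cobounded ℂ) (cocompact ℂ) := by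
    intro c hc
    have hcp : 0 < dist p c := dist_pos.2 fun h ↦ hp (h ▸ hFC hc)
    rw [← Metric.cobounded_eq_cocompact, ← Metric.tendsto_dist_right_atTop_iff p]
    simp only [dist_homothety_center]
    exact tendsto_norm_cobounded_atTop.atTop_mul_const hcp
  have hsum : Tendsto (fun w : ℂ ↦ ∑ c ∈ F, φ (homothety p w c)) (cobounded ℂ) (𝓝 0) := by
    simpa only [Finset.sum_const_zero] using!
      tendsto_finsetSum F fun c hc ↦ hφ.is_zero_at_infty.comp (hescape c hc)
  have hfar : ∀ᶠ w : ℂ in cobounded ℂ, 1 ≤ ‖w‖ :=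
    tendsto_norm_cobounded_atTop.eventually_ge_atTop 1
  exact hsum.congr' (hfar.mono fun w hw ↦ (hF w hw).symm)

end TestSum

end LocFin

theorem IsClf.union {A C : Set ℂ} (hA : IsClf A) (hC : LocFin C) : IsClf (A ∪ C) :=
  ⟨hA.1.union hC.countable, hA.2.1.mono Set.subset_union_left, hA.2.2.union hC⟩

theorem isClf_range_natCast : IsClf (Set.range ((↑) : ℕ → ℂ)) :=
  ⟨Set.countable_range _, Set.infinite_range_of_injective Nat.cast_injective,
    LocFin.range_of_isClosedEmbedding <|
      Complex.isometry_ofReal.isClosedEmbedding.comp Nat.isClosedEmbedding_coe_real⟩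

theorem exists_re_eq_one_forall_ofReal_mul_notMem {Q : Set ℂ} (hQ : Q.Countable) (h0 : 0 ∉ Q) :
    ∃ u : ℂ, u.re = 1 ∧ ∀ r : ℝ, r * u ∉ Q := by
  obtain ⟨y, hy⟩ := ((hQ.image fun q ↦ q.im / q.re).dense_compl ℝ).nonempty
  refine ⟨⟨1, y⟩, rfl, fun r hr ↦ hy ⟨_, hr, ?_⟩⟩
  have hr0 : r ≠ 0 := by
    rintro rfl
    exact h0 (by simpa using hr)
  simp [hr0]

theorem exists_re_eq_one_forall_disjoint_image_homothety {A C : Set ℂ} (hA : A.Countable)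
    (hC : C.Countable) (hAC : Disjoint A C) {p : ℂ} (hp : p ∉ C) :
    ∃ u : ℂ, u.re = 1 ∧ ∀ r : ℝ, Disjoint A (homothety p (1 + r * u) '' C) := by
  have hne : ∀ c ∈ C, c - p ≠ 0 := fun c hc h ↦ hp (sub_eq_zero.1 h ▸ hc)
  obtain ⟨u, hu, hray⟩ := exists_re_eq_one_forall_ofReal_mul_notMem
    (hA.image2 hC fun a c ↦ (a - c) / (c - p)) (by
      rintro ⟨a, ha, c, hc, h⟩
      have hac : a = c := sub_eq_zero.1 ((div_eq_zero_iff.1 h).resolve_right (hne c hc))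
      exact Set.disjoint_left.1 hAC ha (hac ▸ hc))
  refine ⟨u, hu, fun r ↦ Set.disjoint_left.2 ?_⟩
  rintro _ ha ⟨c, hc, rfl⟩
  refine hray r ⟨_, ha, c, hc, (div_eq_iff (hne c hc)).2 ?_⟩
  simp only [AffineMap.homothety_apply, vsub_eq_sub, vadd_eq_add, smul_eq_mul]
  ring

section VagueTopology

variable {T : TestFamily} {X : Type*} {l : Filter X}

theorem tendsto_dV {F : X → Set ℂ} {B : Set ℂ}
    (h : ∀ j, Tendsto (fun x ↦ Ssum T j (F x)) l (𝓝 (Ssum T j B))) (A : Set ℂ) :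
    Tendsto (fun x ↦ dV T A (F x)) l (𝓝 (dV T A B)) := by
  refine tendsto_tsum_of_dominated_convergence (bound := fun j ↦ (1 / 2 : ℝ) ^ (j + 1))
    ((summable_nat_add_iff 1).2 summable_geometric_two) (fun j ↦ ?_) (.of_forall fun x j ↦ ?_)
  · have habs := (tendsto_const_nhds (x := Ssum T j A)).sub (h j) |>.abs
    exact (habs.div (habs.const_add 1) (by positivity)).const_mul _
  · rw [Real.norm_of_nonneg (by positivity)]
    refine mul_le_of_le_one_right (by positivity) ((div_le_one (by positivity)).2 ?_)
    exact le_add_of_nonneg_left zero_le_one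

theorem ClfSp.tendsto_of_tendsto_Ssum {f : X → ClfSp T} {B : ClfSp T}
    (h : ∀ j, Tendsto (fun x ↦ Ssum T j (f x).carrier) l (𝓝 (Ssum T j B.carrier))) :
    Tendsto f l (𝓝 B) := by
  refine TopologicalSpace.tendsto_nhds_generateFrom_iff.2 ?_
  rintro _ ⟨A, ε, -, rfl⟩ hB
  exact (tendsto_dV h A.carrier).eventually_lt_const hB

end VagueTopology

theorem one_add_le_norm_one_add_ofReal_mul {u : ℂ} (hu : u.re = 1) (r : ℝ) :
    1 + r ≤ ‖1 + r * u‖ := by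
  simpa [hu] using Complex.re_le_norm (1 + r * u)

theorem Ssum_union (T : TestFamily) (j : ℕ) {A C : Set ℂ} (hA : LocFin A) (hC : LocFin C)
    (hAC : Disjoint A C) : Ssum T j (A ∪ C) = Ssum T j A + Ssum T j C :=
  finsum_mem_union' hAC (hA.finite_inter_support (T.cpt j)) (hC.finite_inter_support (T.cpt j))

namespace ClfSp

variable {T : TestFamily}

attribute [ext] ClfSp

/-- The point `A ∪ C` of `C^lf_∞(ℂ)` obtained by adding to `A` a locally finite set `C`, which may
be finite or empty. -/
def union (A : ClfSp T) {C : Set ℂ} (hC : LocFin C) : ClfSp T :=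
  ⟨A.carrier ∪ C, A.prop.union hC⟩

theorem tendsto_union {X : Type*} {l : Filter X} (A : ClfSp T) {D : X → Set ℂ} {C : Set ℂ}
    (hD : ∀ x, LocFin (D x)) (hC : LocFin C) (hAD : ∀ x, Disjoint A.carrier (D x))
    (hAC : Disjoint A.carrier C)
    (h : ∀ j, Tendsto (fun x ↦ Ssum T j (D x)) l (𝓝 (Ssum T j C))) :
    Tendsto (fun x ↦ A.union (hD x)) l (𝓝 (A.union hC)) := by
  have hA : LocFin A.carrier := A.prop.2.2
  refine tendsto_of_tendsto_Ssum fun j ↦ ?_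
  simp only [union, Ssum_union T j hA (hD _) (hAD _), Ssum_union T j hA hC hAC]
  exact (h j).const_add _

theorem joined_union (A : ClfSp T) {C : Set ℂ} (hC : LocFin C) (hAC : Disjoint A.carrier C) :
    Joined A (A.union hC) := by
  obtain ⟨p, hp⟩ := (hC.countable.dense_compl ℝ).nonempty
  obtain ⟨u, hu, hdisj⟩ :=
    exists_re_eq_one_forall_disjoint_image_homothety A.prop.1 hC.countable hAC hp
  let w (r : ℝ≥0) : ℂ := 1 + (r : ℝ) * u
  have hw_norm (r : ℝ≥0) : 1 + (r : ℝ) ≤ ‖w r‖ := one_add_le_norm_one_add_ofReal_mul hu r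
  have hw_ne (r : ℝ≥0) : w r ≠ 0 := norm_pos_iff.1 (lt_of_lt_of_le (by positivity) (hw_norm r))
  have hw_cont : Continuous w := by fun_prop
  have hw_atTop : Tendsto w atTop (cobounded ℂ) :=
    tendsto_norm_atTop_iff_cobounded.1 <| tendsto_atTop_mono hw_norm <|
      tendsto_atTop_add_const_left _ 1 (NNReal.tendsto_coe_atTop.2 tendsto_id)
  have hD (r : ℝ≥0) : LocFin (homothety p (w r) '' C) := hC.image_homothety p (hw_ne r)
  have hcont : Continuous fun r ↦ A.union (hD r) := continuous_iff_continuousAt.2 fun r ↦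
    A.tendsto_union hD (hD r) (hdisj ·) (hdisj r) fun j ↦
      ((hC.continuousOn_finsum_image_homothety (T.cpt j) (T.cont j) p).comp_continuous
        hw_cont hw_ne).tendsto r
  have h_empty : LocFin ∅ := hC.mono (Set.empty_subset C)
  have hlim : Tendsto (fun r ↦ A.union (hD r)) atTop (𝓝 (A.union h_empty)) :=
    A.tendsto_union hD h_empty (hdisj ·) (Set.disjoint_empty _) fun j ↦ by
      simpa only [Ssum, finsum_mem_empty] using!
        (hC.tendsto_finsum_image_homothety_cobounded (T.cpt j) hp).comp hw_atTop
  have h_start : A.union (hD 0) = A.union hC := ClfSp.ext (by simp [union, w])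
  have h_end : A.union h_empty = A := ClfSp.ext (Set.union_empty _)
  simpa only [h_start, h_end] using joined_of_tendsto_atTop hcont hlim

theorem joined_of_subset {A B : ClfSp T} (hAB : A.carrier ⊆ B.carrier) : Joined A B := by
  have hC : LocFin (B.carrier \ A.carrier) := B.prop.2.2.mono Set.sdiff_subset
  have hB : A.union hC = B := ClfSp.ext (Set.union_sdiff_cancel hAB)
  exact hB ▸ A.joined_union hC Set.disjoint_sdiff_right

end ClfSp

/-- The metric space `(C^lf_∞(ℂ), d_V)` is path-connected. -/
theorem clfSp_pathConnected (T : TestFamily) : PathConnectedSpace (ClfSp T) := by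
  refine ⟨⟨⟨_, isClf_range_natCast⟩⟩, fun A B ↦ ?_⟩
  let U : ClfSp T := A.union B.prop.2.2
  have hAU : Joined A U := ClfSp.joined_of_subset Set.subset_union_left
  have hBU : Joined B U := ClfSp.joined_of_subset Set.subset_union_right
  exact hAU.trans hBU.symm
end
end

section
/- Let U ⊆ ℂ be open and let γ : [0,1] → U be continuous. Then there exists a continuous map Ψ : [0,1] × ℂ → ℂ such that, writing Ψ_t := Ψ(t, ·): (1) Ψ_0 is the identity of ℂ; (2) each Ψ_t is a homeomorphism of ℂ; (3) Ψ_t(γ(0)) = γ(t) for all t ∈ [0,1]; (4) Ψ_t(z) = z for all t ∈ [0,1] and all z ∈ ℂ \ U. -/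
open unitInterval

/-!
Moving `c t` to a nearby point `d t` is achieved by adding `φ • (d t - c t)`, where `φ` is a tent
function peaked at `c t`: if the displacement is shorter than the radius of the tent, this map
is a homeomorphism. A long path is handled by subdividing its domain at times `τ n` and composing
such pushes, the `n`-th of which carries `γ (min t (τ n))` to `γ (min t (τ (n + 1)))`.
-/

section Tent

open scoped NNReal

variable {X : Type*} [PseudoMetricSpace X]

/-- The tent function of radius `r` peaked at `c`: it decreases linearly in the distance from the
value `1` at `c` to `0` at distance `r`, and vanishes from there on. The radius is taken in `ℝ≥0`
because `r⁻¹` serves as a Lipschitz constant; for `r = 0`, where `r⁻¹ = 0`, the function is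
constantly `1`. -/
noncomputable def tent (r : ℝ≥0) (c x : X) : ℝ :=
  max 0 (1 - dist x c / r)

theorem tent_self (r : ℝ≥0) (c : X) : tent r c c = 1 := by
  simp [tent]

theorem tent_eq_zero_of_le_dist {r : ℝ≥0} (hr : 0 < r) {c x : X} (hx : r ≤ dist x c) :
    tent r c x = 0 :=
  max_eq_left <| sub_nonpos.2 <| (one_le_div (NNReal.coe_pos.2 hr)).2 hx

theorem continuous_uncurry_tent (r : ℝ≥0) : Continuous fun p : X × X => tent r p.1 p.2 := by
  unfold tent
  fun_prop

theorem lipschitzWith_tent (r : ℝ≥0) (c : X) : LipschitzWith r⁻¹ (tent r c) := by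
  refine LipschitzWith.const_max (LipschitzWith.of_dist_le_mul fun x y => ?_) 0
  calc dist (1 - dist x c / r) (1 - dist y c / r)
      = (r : ℝ)⁻¹ * dist (dist x c) (dist y c) := by
        rw [dist_sub_left, div_eq_inv_mul, div_eq_inv_mul, ← smul_eq_mul, ← smul_eq_mul,
          dist_smul₀, Real.norm_of_nonneg (by positivity)]
    _ ≤ (r : ℝ)⁻¹ * dist x y := by
        gcongr
        exact dist_dist_dist_le_left x y c

end Tent

section Shear

open scoped NNReal

theorem lipschitzWith_smul_const {𝕜 E : Type*} [NontriviallyNormedField 𝕜]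
    [SeminormedAddCommGroup E] [NormedSpace 𝕜 E] (v : E) :
    LipschitzWith ‖v‖₊ fun s : 𝕜 => s • v :=
  ContinuousLinearMap.nnnorm_toSpanSingleton (𝕜 := 𝕜) v ▸
    (ContinuousLinearMap.toSpanSingleton 𝕜 v).lipschitz

theorem surjective_add_smul {E : Type*} [SeminormedAddCommGroup E] [NormedSpace ℝ E] {φ : E → ℝ}
    {K : ℝ≥0} {v : E} (hφ : LipschitzWith K φ) (hKv : K * ‖v‖₊ < 1) :
    Function.Surjective fun x => x + φ x • v := by
  intro y
  -- A preimage of `y` must lie on the line `y - ℝ • v`; finding it is a fixed point problem in `ℝ`.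
  have hline : LipschitzWith ‖v‖₊ fun s : ℝ => y - s • v := by
    simpa only [zero_add] using (LipschitzWith.const y).sub (lipschitzWith_smul_const v)
  have hcontr : ContractingWith (K * ‖v‖₊) fun s : ℝ => φ (y - s • v) := ⟨hKv, hφ.comp hline⟩
  obtain ⟨s, hs⟩ : ∃ s : ℝ, φ (y - s • v) = s := ⟨_, hcontr.fixedPoint_isFixedPt⟩
  exact ⟨y - s • v, by simp only [hs, sub_add_cancel]⟩

theorem isHomeomorph_add_smul {E : Type*} [NormedAddCommGroup E] [NormedSpace ℝ E] {φ : E → ℝ}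
    {K : ℝ≥0} {v : E} (hφ : LipschitzWith K φ) (hKv : K * ‖v‖₊ < 1) :
    IsHomeomorph fun x => x + φ x • v := by
  have hsmul : LipschitzWith (‖v‖₊ * K) fun x => φ x • v := (lipschitzWith_smul_const v).comp hφ
  have hlip : LipschitzWith (1 + ‖v‖₊ * K) fun x => x + φ x • v := LipschitzWith.id.add hsmul
  have hanti : AntilipschitzWith (1⁻¹ - ‖v‖₊ * K)⁻¹ fun x => x + φ x • v :=
    AntilipschitzWith.id.add_lipschitzWith hsmul (by rwa [inv_one, mul_comm])
  exact isHomeomorph_iff_isEmbedding_surjective.2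
    ⟨(hanti.isUniformEmbedding hlip.uniformContinuous).isEmbedding, surjective_add_smul hφ hKv⟩

end Shear

section AmbientIsotopy

variable {X : Type*} [TopologicalSpace X]

/-- `Ψ` is an ambient isotopy of `X` that moves only points of `U`: a jointly continuous family of
homeomorphisms of `X`, starting at the identity and fixing the complement of `U` at all times. -/
structure IsAmbientIsotopyIn (U : Set X) (Ψ : I → X ≃ₜ X) : Prop where
  continuous : Continuous fun p : I × X => Ψ p.1 p.2
  map_zero : ∀ x, Ψ 0 x = x
  map_of_notMem : ∀ t, ∀ x ∉ U, Ψ t x = x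

namespace IsAmbientIsotopyIn

theorem refl (U : Set X) : IsAmbientIsotopyIn U fun _ => Homeomorph.refl X where
  continuous := continuous_snd
  map_zero _ := rfl
  map_of_notMem _ _ _ := rfl

theorem trans {U : Set X} {Ψ Φ : I → X ≃ₜ X} (hΨ : IsAmbientIsotopyIn U Ψ)
    (hΦ : IsAmbientIsotopyIn U Φ) :
    IsAmbientIsotopyIn U fun t => (Ψ t).trans (Φ t) where
  continuous := hΦ.continuous.comp (continuous_fst.prodMk hΨ.continuous)
  map_zero x := by rw [Homeomorph.trans_apply, hΨ.map_zero, hΦ.map_zero]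
  map_of_notMem t x hx := by
    rw [Homeomorph.trans_apply, hΨ.map_of_notMem t x hx, hΦ.map_of_notMem t x hx]

end IsAmbientIsotopyIn

end AmbientIsotopy

theorem exists_subdivision_dist_lt {X : Type*} [PseudoMetricSpace X] {γ : I → X}
    (hγ : Continuous γ) {ε : ℝ} (hε : 0 < ε) :
    ∃ τ : ℕ → I, τ 0 = 0 ∧ (∃ N, τ N = 1) ∧
      ∀ n t, dist (γ (min t (τ (n + 1)))) (γ (min t (τ n))) < ε := by
  obtain ⟨τ, hτ0, hτmono, ⟨N, hN⟩, hτ⟩ := exists_monotone_Icc_subset_open_cover_unitInterval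
    (c := fun s => γ ⁻¹' Metric.ball (γ s) (ε / 2)) (fun s => Metric.isOpen_ball.preimage hγ)
    fun s _ => Set.mem_iUnion.2 ⟨s, Metric.mem_ball_self (half_pos hε)⟩
  refine ⟨τ, hτ0, ⟨N, hN N le_rfl⟩, fun n t => ?_⟩
  have hstep : τ n ≤ τ (n + 1) := hτmono n.le_succ
  rcases le_total t (τ n) with ht | ht
  · rwa [min_eq_left ht, min_eq_left (ht.trans hstep), dist_self]
  · obtain ⟨s, hs⟩ := hτ n
    have hnext : dist (γ (min t (τ (n + 1)))) (γ s) < ε / 2 :=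
      hs ⟨le_min ht hstep, min_le_right _ _⟩
    have hprev : dist (γ (min t (τ n))) (γ s) < ε / 2 := by
      rw [min_eq_right ht]
      exact hs ⟨le_rfl, hstep⟩
    linarith [dist_triangle_right (γ (min t (τ (n + 1)))) (γ (min t (τ n))) (γ s)]

section NormedSpace

open scoped NNReal

variable {E : Type*} [NormedAddCommGroup E] [NormedSpace ℝ E] {U : Set E}

theorem exists_isAmbientIsotopyIn_of_dist_lt {c d : I → E} (hc : Continuous c) (hd : Continuous d)
    (h0 : c 0 = d 0) {r : ℝ≥0} (hcd : ∀ t, dist (d t) (c t) < r)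
    (hU : ∀ t, Metric.ball (c t) r ⊆ U) :
    ∃ Ψ : I → E ≃ₜ E, IsAmbientIsotopyIn U Ψ ∧ ∀ t, Ψ t (c t) = d t := by
  have hr : 0 < r := NNReal.coe_pos.1 (dist_nonneg.trans_lt (hcd 0))
  have hshort (t : I) : r⁻¹ * ‖d t - c t‖₊ < 1 := by
    rw [inv_mul_lt_one₀ hr, ← NNReal.coe_lt_coe, coe_nnnorm, ← dist_eq_norm]
    exact hcd t
  let Ψ (t : I) : E ≃ₜ E :=
    (isHomeomorph_add_smul (lipschitzWith_tent r (c t)) (hshort t)).homeomorph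
  have hΨ (t : I) (x : E) : Ψ t x = x + tent r (c t) x • (d t - c t) := rfl
  refine ⟨Ψ, ⟨?_, fun x => ?_, fun t x hx => ?_⟩, fun t => ?_⟩
  · have htent : Continuous fun p : I × E => tent r (c p.1) p.2 :=
      (continuous_uncurry_tent r).comp (by fun_prop : Continuous fun p : I × E => (c p.1, p.2))
    simp only [hΨ]
    fun_prop
  · rw [hΨ, h0, sub_self, smul_zero, add_zero]
  · have hfar : r ≤ dist x (c t) := not_lt.1 fun hlt => hx (hU t hlt)
    rw [hΨ, tent_eq_zero_of_le_dist hr hfar, zero_smul, add_zero]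
  · rw [hΨ, tent_self, one_smul, add_sub_cancel]

theorem one_point_isotopy_general (hU : IsOpen U) {γ : I → E} (hγ : Continuous γ)
    (hγU : ∀ t, γ t ∈ U) :
    ∃ Ψ : I → E ≃ₜ E, IsAmbientIsotopyIn U Ψ ∧ ∀ t, Ψ t (γ 0) = γ t := by
  obtain ⟨r, hr, hrU⟩ : ∃ r > 0, Metric.thickening r (Set.range γ) ⊆ U :=
    (isCompact_range hγ).exists_thickening_subset_open hU (Set.range_subset_iff.2 hγU)
  lift r to ℝ≥0 using hr.le
  obtain ⟨τ, hτ0, ⟨N, hN⟩, hτ⟩ := exists_subdivision_dist_lt hγ hr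
  have hclamp (n : ℕ) :
      ∃ Ψ : I → E ≃ₜ E, IsAmbientIsotopyIn U Ψ ∧ ∀ t, Ψ t (γ 0) = γ (min t (τ n)) := by
    induction n with
    | zero =>
      have hstart (t : I) : min t (τ 0) = 0 := by rw [hτ0, min_eq_right unitInterval.nonneg']
      exact ⟨_, .refl U, fun t => by rw [hstart, Homeomorph.refl_apply, id]⟩
    | succ n ih =>
      obtain ⟨Ψ, hΨ, hΨγ⟩ := ih
      obtain ⟨Φ, hΦ, hΦγ⟩ := exists_isAmbientIsotopyIn_of_dist_lt (U := U)
        (c := fun t => γ (min t (τ n))) (d := fun t => γ (min t (τ (n + 1))))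
        (by fun_prop) (by fun_prop) (by simp only [min_eq_left, unitInterval.nonneg']) (hτ n)
        fun t => (Metric.ball_subset_thickening (Set.mem_range_self _) r).trans hrU
      exact ⟨_, hΨ.trans hΦ, fun t => by rw [Homeomorph.trans_apply, hΨγ, hΦγ]⟩
  obtain ⟨Ψ, hΨ, hΨγ⟩ := hclamp N
  exact ⟨Ψ, hΨ, fun t => by rw [hΨγ, hN, min_eq_left unitInterval.le_one']⟩

end NormedSpace

/-- One-point isotopy supported in an open set: if `U ⊆ ℂ` is open and `γ : [0,1] → U`
is continuous, then there is a continuous family `Ψ_t` of homeomorphisms of `ℂ` with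
`Ψ_0 = id`, `Ψ_t(γ(0)) = γ(t)`, and `Ψ_t = id` on `ℂ \ U`. -/
theorem one_point_isotopy (U : Set ℂ) (hU : IsOpen U) (γ : unitInterval → ℂ)
    (hγ : Continuous γ) (hγU : ∀ t, γ t ∈ U) :
    ∃ Ψ : unitInterval → ℂ ≃ₜ ℂ,
      Continuous (fun p : unitInterval × ℂ => Ψ p.1 p.2) ∧
      (∀ z : ℂ, Ψ 0 z = z) ∧
      (∀ t, Ψ t (γ 0) = γ t) ∧
      (∀ t, ∀ z : ℂ, z ∉ U → Ψ t z = z) := by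
  obtain ⟨Ψ, hΨ, hΨγ⟩ := one_point_isotopy_general hU hγ hγU
  exact ⟨Ψ, hΨ.continuous, hΨ.map_zero, hΨγ, hΨ.map_of_notMem⟩
end

section
/- Let K be a compact topological space and let F : K → C^lf_∞(ℂ) be vaguely continuous. Then for every compact set B ⊆ ℂ there exists an integer N ≥ 0 such that the cardinality of F(x) ∩ B is at most N for every x ∈ K. -/
open scoped Topology
open Filter

noncomputable section

/-- A map into `C^lf_∞(ℂ)` is vaguely continuous if all test sums against continuous
compactly supported functions are continuous. -/
def VaguelyContinuous {X : Type*} [TopologicalSpace X] (F : X → Set ℂ) : Prop :=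
  ∀ φ : ℂ → ℝ, Continuous φ → HasCompactSupport φ →
    Continuous (fun x => ∑ᶠ a ∈ F x, φ a)

/-!
A continuous compactly supported `φ` with `0 ≤ φ` and `φ = 1` on `B` gives
`#(F x ∩ B) ≤ ∑_{a ∈ F x} φ a`. The right-hand side is continuous in `x` by vague continuity,
hence bounded on a compact space.
-/

open Function in
theorem ncard_inter_le_finsum_mem {α R : Type*} [AddCommMonoidWithOne R] [PartialOrder R]
    [AddLeftMono R] [ZeroLEOneClass R] [NeZero (1 : R)] {s t : Set α} {f : α → R}
    (hfin : (s ∩ support f).Finite) (hnonneg : ∀ a ∈ s, 0 ≤ f a)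
    (hone : ∀ a ∈ s ∩ t, 1 ≤ f a) :
    ((s ∩ t).ncard : R) ≤ ∑ᶠ a ∈ s, f a := by
  have hinter_fin : (s ∩ t).Finite := hfin.subset fun a ha =>
    ⟨ha.1, (zero_lt_one.trans_le (hone a ha)).ne'⟩
  have hind_le : (s ∩ t).indicator 1 ≤ s.indicator f :=
    Set.indicator_le' (fun a ha => (hone a ha).trans_eq (Set.indicator_of_mem ha.1 f).symm)
      fun a _ => Set.indicator_nonneg hnonneg a
  calc ((s ∩ t).ncard : R)
      = ∑ᶠ a ∈ s ∩ t, 1 := by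
        simpa only [Nat.cast_one, finsum_one] using Nat.cast_finsum_mem hinter_fin (fun _ => 1)
    _ = ∑ᶠ a, (s ∩ t).indicator 1 a := finsum_mem_def _ _
    _ ≤ ∑ᶠ a, s.indicator f a :=
        finsum_le_finsum' (hinter_fin.subset Set.support_indicator_subset)
          (by rwa [HasFiniteSupport, Set.support_indicator]) hind_le
    _ = ∑ᶠ a ∈ s, f a := (finsum_mem_def _ _).symm

theorem uniform_bound_on_compacta_general {K X : Type*} [TopologicalSpace K] [CompactSpace K]
    [TopologicalSpace X] [R1Space X] [WeaklyLocallyCompactSpace X] {F : K → Set X}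
    (hfin : ∀ x, ∀ C : Set X, IsCompact C → (F x ∩ C).Finite)
    (hcont : ∀ φ : X → ℝ, Continuous φ → HasCompactSupport φ →
      Continuous fun x => ∑ᶠ a ∈ F x, φ a)
    {B : Set X} (hB : IsCompact B) :
    ∃ N : ℕ, ∀ x, (F x ∩ B).ncard ≤ N := by
  obtain ⟨φ, hφ_one, -, hφ_supp, hφ_mem⟩ :=
    exists_continuous_one_zero_of_isCompact hB isClosed_empty (Set.disjoint_empty B)
  obtain ⟨C, hC⟩ := (isCompact_range (hcont φ φ.continuous hφ_supp)).bddAbove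
  obtain ⟨N, hN⟩ := exists_nat_ge C
  refine ⟨N, fun x => Nat.cast_le (α := ℝ).mp ?_⟩
  have hφ_fin : (F x ∩ Function.support φ).Finite :=
    (hfin x _ hφ_supp).subset (Set.inter_subset_inter_right _ (subset_tsupport φ))
  calc ((F x ∩ B).ncard : ℝ)
      ≤ ∑ᶠ a ∈ F x, φ a :=
        ncard_inter_le_finsum_mem hφ_fin (fun a _ => (hφ_mem a).1) fun _ ha => (hφ_one ha.2).ge
    _ ≤ C := hC (Set.mem_range_self x)
    _ ≤ N := hN

/-- Uniform bound on points in a compact set: if `K` is compact and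
`F : K → C^lf_∞(ℂ)` is vaguely continuous, then for every compact `B ⊆ ℂ` there is
`N` with `#(F(x) ∩ B) ≤ N` for all `x ∈ K`. -/
theorem uniform_bound_on_compacta (K : Type*) [TopologicalSpace K] [CompactSpace K]
    (F : K → Set ℂ) (hF : ∀ x, IsClf (F x)) (hFc : VaguelyContinuous F)
    (B : Set ℂ) (hB : IsCompact B) :
    ∃ N : ℕ, ∀ x : K, (F x ∩ B).ncard ≤ N :=
  uniform_bound_on_compacta_general (fun x => (hF x).2.2) hFc hB
end
end

section
/- Let K be a compact topological space, let F : K → C^lf_∞(ℂ) be vaguely continuous, and let Φ : K × [0,1] × ℂ → ℂ be continuous such that (1) for every (x,t) ∈ K × [0,1] the map Φ_{x,t} := Φ(x,t,·) : ℂ → ℂ is a homeomorphism, and (2) there exists a compact set S ⊆ ℂ with Φ_{x,t}(z) = z for all (x,t) ∈ K × [0,1] and all z ∈ ℂ \ S. Then for each (x,t) the image set {Φ_{x,t}(a) : a ∈ F(x)} belongs to C^lf_∞(ℂ), and the map H : K × [0,1] → C^lf_∞(ℂ), H(x,t) = {Φ_{x,t}(a) : a ∈ F(x)}, is vaguely continuous;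 that is, for every φ ∈ C_c(ℂ) the function (x,t) ↦ ∑_{a∈F(x)} φ(Φ(x,t,a)) is continuous on K × [0,1]. -/
open scoped Topology
open Filter

noncomputable section

/-!
Let `f` be a jointly continuous integrand whose slices `f (y, ·)`, for `y` near `y₀`, are supported
in a fixed compact set `L`, and let `χ` be a compactly supported bump function equal to `1` on `L`.
Then `|f (y, ·) - f (y₀, ·)| ≤ δ y * χ`, where `δ y` is the uniform distance on `L` and tends to `0`
at `y₀`. Summing over `F y` bounds the effect of moving the integrand by `δ y * ∑ a ∈ F y, χ a`.
Vague continuity is used twice: it keeps the factor `∑ a ∈ F y, χ a` bounded, and it handles the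
sums of the fixed integrand `f (y₀, ·)`. The theorem is the case `f = φ ∘ Φ`.
-/

theorem dist_finsum_mem_le {α V : Type*} [SeminormedAddCommGroup V]
    {A : Set α} {f g : α → V} {b : α → ℝ}
    (hf : (A ∩ f.support).Finite) (hg : (A ∩ g.support).Finite) (hb : (A ∩ b.support).Finite)
    (h : ∀ a ∈ A, dist (f a) (g a) ≤ b a) :
    dist (∑ᶠ a ∈ A, f a) (∑ᶠ a ∈ A, g a) ≤ ∑ᶠ a ∈ A, b a := by
  classical
  let s : Finset α := hf.toFinset ∪ hg.toFinset ∪ hb.toFinset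
  have hsA : (s : Set α) ⊆ A := by
    simp only [s, Finset.coe_union, Set.Finite.coe_toFinset, Set.union_subset_iff,
      Set.inter_subset_left, and_self]
  have hfs : A ∩ f.support ⊆ s := fun a ha => by simp [s, ha.1, ha.2]
  have hgs : A ∩ g.support ⊆ s := fun a ha => by simp [s, ha.1, ha.2]
  have hbs : A ∩ b.support ⊆ s := fun a ha => by simp [s, ha.1, ha.2]
  rw [finsum_mem_eq_sum_of_subset f hfs hsA, finsum_mem_eq_sum_of_subset g hgs hsA,
    finsum_mem_eq_sum_of_subset b hbs hsA]
  exact dist_sum_sum_le_of_le s fun a ha => h a (hsA ha)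

section VagueContinuity

variable {Y E E' : Type*} [TopologicalSpace Y] [TopologicalSpace E] [TopologicalSpace E']

/-- A subset of a topological space is locally finite if it meets every compact set in a finite
set; `LocFin` is the case of `ℂ`. -/
def IsLocallyFiniteSet (A : Set E) : Prop := ∀ C : Set E, IsCompact C → (A ∩ C).Finite

/-- A countably infinite, locally finite subset of a topological space; `IsClf` is the case
of `ℂ`. -/
def IsInfiniteConfiguration (A : Set E) : Prop := A.Countable ∧ A.Infinite ∧ IsLocallyFiniteSet A

/-- Vague continuity of a family of subsets of a topological space, tested against continuous
compactly supported real functions; `VaguelyContinuous` is the case of `ℂ`. -/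
def IsVaguelyContinuous (F : Y → Set E) : Prop :=
  ∀ φ : E → ℝ, Continuous φ → HasCompactSupport φ → Continuous fun y => ∑ᶠ a ∈ F y, φ a

namespace IsLocallyFiniteSet

variable {A : Set E}

theorem finite_inter_of_compl_mem_cocompact (hA : IsLocallyFiniteSet A) {s : Set E}
    (hs : sᶜ ∈ cocompact E) : (A ∩ s).Finite := by
  obtain ⟨C, hC, hCs⟩ := mem_cocompact.1 hs
  exact (hA C hC).subset (Set.inter_subset_inter_right A (Set.compl_subset_compl.1 hCs))

theorem finite_inter_support {V : Type*} [Zero V] (hA : IsLocallyFiniteSet A) {f : E → V}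
    (hf : HasCompactSupport f) : (A ∩ f.support).Finite :=
  (hA _ hf).subset (Set.inter_subset_inter_right A (subset_tsupport f))

theorem image (hA : IsLocallyFiniteSet A) {g : E → E'}
    (hg : Tendsto g (cocompact E) (cocompact E')) : IsLocallyFiniteSet (g '' A) := by
  intro C hC
  rw [← Set.image_inter_preimage]
  exact (hA.finite_inter_of_compl_mem_cocompact (hg hC.compl_mem_cocompact)).image g

theorem infinite_image (hA : IsLocallyFiniteSet A) (hinf : A.Infinite) {g : E → E'}
    (hg : Tendsto g (cocompact E) (cocompact E')) : (g '' A).Infinite := by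
  intro hfin
  have hpre : (A ∩ g ⁻¹' (g '' A)).Finite :=
    hA.finite_inter_of_compl_mem_cocompact (hg hfin.isCompact.compl_mem_cocompact)
  exact hinf (hpre.subset (Set.subset_inter Set.Subset.rfl (Set.subset_preimage_image g A)))

end IsLocallyFiniteSet

theorem IsInfiniteConfiguration.image {A : Set E} (hA : IsInfiniteConfiguration A) {g : E → E'}
    (hg : Tendsto g (cocompact E) (cocompact E')) : IsInfiniteConfiguration (g '' A) :=
  ⟨hA.1.image g, hA.2.2.infinite_image hA.2.1 hg, hA.2.2.image hg⟩

theorem hasCompactSupport_of_eventually_cocompact [R1Space E] {V : Type*} [Zero V] {f : E → V}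
    (hf : ∀ᶠ z in cocompact E, f z = 0) : HasCompactSupport f := by
  rwa [hasCompactSupport_iff_eventuallyEq, coclosedCompact_eq_cocompact]

theorem tendsto_prodMk_nhds_prod {α : Type*} (y : Y) (l : Filter α) :
    Tendsto (Prod.mk y) l (𝓝 y ×ˢ l) :=
  tendsto_const_nhds.prodMk tendsto_id

theorem exists_dist_le_mul_compactlySupported [RegularSpace E] [LocallyCompactSpace E]
    {V : Type*} [PseudoMetricSpace V] [Zero V] {f : Y × E → V} (hf : Continuous f) {y₀ : Y}
    (hf₀ : ∀ᶠ p in 𝓝 y₀ ×ˢ cocompact E, f p = 0) :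
    ∃ (δ : Y → ℝ) (χ : E → ℝ), Tendsto δ (𝓝 y₀) (𝓝 0) ∧ Continuous χ ∧ HasCompactSupport χ ∧
      ∀ᶠ y in 𝓝 y₀, ∀ z, dist (f (y₀, z)) (f (y, z)) ≤ δ y * χ z := by
  obtain ⟨U, hU, W, hW, hUW⟩ := mem_prod_iff.1 hf₀
  obtain ⟨L, hL, hLW⟩ := mem_cocompact.1 hW
  have hfL : ∀ y ∈ U, ∀ z ∉ L, f (y, z) = 0 := fun y hy z hz => hUW ⟨hy, hLW hz⟩
  obtain ⟨χ, hχL, -, hχc, hχ⟩ := exists_continuous_one_zero_of_isCompact hL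
    isClosed_empty (Set.disjoint_empty L)
  have : CompactSpace L := isCompact_iff_compactSpace.1 hL
  let r : C(Y, C(L, V)) := ContinuousMap.curry ⟨fun p : Y × L => f (p.1, p.2), by fun_prop⟩
  refine ⟨fun y => dist (r y₀) (r y), χ, ?_, χ.continuous, hχc, ?_⟩
  · exact tendsto_const_nhds.dist (r.continuous.tendsto y₀) |>.trans_eq (by rw [dist_self])
  · filter_upwards [hU] with y hy z
    by_cases hz : z ∈ L
    · rw [hχL hz, Pi.one_apply, mul_one]
      exact ContinuousMap.dist_apply_le_dist (f := r y₀) (g := r y) ⟨z, hz⟩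
    · rw [hfL y₀ (mem_of_mem_nhds hU) z hz, hfL y hy z hz, dist_self]
      exact mul_nonneg dist_nonneg (hχ z).1

theorem IsVaguelyContinuous.continuous_finsum_mem [RegularSpace E] [LocallyCompactSpace E]
    {F : Y → Set E} (hFc : IsVaguelyContinuous F) (hF : ∀ y, IsLocallyFiniteSet (F y))
    {f : Y × E → ℝ} (hf : Continuous f) (hf₀ : ∀ y, ∀ᶠ p in 𝓝 y ×ˢ cocompact E, f p = 0) :
    Continuous fun y => ∑ᶠ a ∈ F y, f (y, a) := by
  have hfc : ∀ y, HasCompactSupport fun z => f (y, z) := fun y =>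
    hasCompactSupport_of_eventually_cocompact ((tendsto_prodMk_nhds_prod y _).eventually (hf₀ y))
  refine continuous_iff_continuousAt.2 fun y₀ => ?_
  obtain ⟨δ, χ, hδ, hχ, hχc, hle⟩ := exists_dist_le_mul_compactlySupported hf (hf₀ y₀)
  have hfixed : Tendsto (fun y => ∑ᶠ a ∈ F y, f (y₀, a)) (𝓝 y₀) (𝓝 (∑ᶠ a ∈ F y₀, f (y₀, a))) :=
    (hFc _ (by fun_prop) (hfc y₀)).tendsto y₀
  have hbound : ∀ᶠ y in 𝓝 y₀, dist (∑ᶠ a ∈ F y, f (y₀, a)) (∑ᶠ a ∈ F y, f (y, a)) ≤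
      δ y * ∑ᶠ a ∈ F y, χ a := by
    filter_upwards [hle] with y hy
    have hmul : δ y * ∑ᶠ a ∈ F y, χ a = ∑ᶠ a ∈ F y, δ y * χ a :=
      (AddMonoidHom.mulLeft (δ y)).map_finsum_mem' ((hF y).finite_inter_support hχc)
    rw [hmul]
    exact dist_finsum_mem_le ((hF y).finite_inter_support (hfc y₀))
      ((hF y).finite_inter_support (hfc y))
      ((hF y).finite_inter_support hχc.mul_left) fun a _ => hy a
  have hmass : Tendsto (fun y => δ y * ∑ᶠ a ∈ F y, χ a) (𝓝 y₀) (𝓝 0) := by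
    simpa only [zero_mul] using hδ.mul ((hFc χ hχ hχc).tendsto y₀)
  exact tendsto_of_tendsto_of_dist hfixed
    (squeeze_zero' (Eventually.of_forall fun _ => dist_nonneg) hbound hmass)

theorem tendsto_cocompact_of_eq_off_compact {α : Type*} {l : Filter α} {Φ : α × E → E} {S : Set E}
    (hS : IsCompact S) (hΦ : ∀ x, ∀ z ∉ S, Φ (x, z) = z) :
    Tendsto Φ (l ×ˢ cocompact E) (cocompact E) := by
  refine tendsto_snd.congr' ?_
  filter_upwards [tendsto_snd.eventually hS.compl_mem_cocompact] with p hp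
  exact (hΦ p.1 p.2 hp).symm

/-- The hypothesis `hΦp` says that `Φ (y, ·)` is proper, locally uniformly in `y`. The sums run over
`F y` and not over its image, so they count the points of the image with multiplicity. -/
theorem param_push_vaguely_continuous_general [RegularSpace E] [LocallyCompactSpace E]
    {F : Y → Set E} (hF : ∀ y, IsInfiniteConfiguration (F y)) (hFc : IsVaguelyContinuous F)
    {Φ : Y × E → E'} (hΦ : Continuous Φ)
    (hΦp : ∀ y, Tendsto Φ (𝓝 y ×ˢ cocompact E) (cocompact E')) :
    (∀ y, IsInfiniteConfiguration ((fun a => Φ (y, a)) '' F y)) ∧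
    ∀ φ : E' → ℝ, Continuous φ → HasCompactSupport φ →
      Continuous fun y => ∑ᶠ a ∈ F y, φ (Φ (y, a)) := by
  refine ⟨fun y => (hF y).image ((hΦp y).comp (tendsto_prodMk_nhds_prod y _)),
    fun φ hφ hφc => hFc.continuous_finsum_mem (fun y => (hF y).2.2) (hφ.comp hΦ) fun y => ?_⟩
  filter_upwards [(hΦp y).eventually hφc.isCompact.compl_mem_cocompact] with p hp
  exact image_eq_zero_of_notMem_tsupport (f := φ) hp

end VagueContinuity

/-- Pushing a vaguely continuous family of configurations by a parametrized, compactly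
supported family of homeomorphisms of `ℂ` stays in `C^lf_∞(ℂ)` and is jointly vaguely
continuous. -/
theorem param_push_vaguely_continuous (K : Type*) [TopologicalSpace K] [CompactSpace K]
    (F : K → Set ℂ) (hF : ∀ x, IsClf (F x)) (hFc : VaguelyContinuous F)
    (Φ : K × unitInterval × ℂ → ℂ) (hΦ : Continuous Φ)
    (hhomeo : ∀ (x : K) (t : unitInterval), ∃ H : ℂ ≃ₜ ℂ, ∀ z, H z = Φ (x, t, z))
    (S : Set ℂ) (hS : IsCompact S)
    (hsupp : ∀ (x : K) (t : unitInterval) (z : ℂ), z ∉ S → Φ (x, t, z) = z) :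
    (∀ (x : K) (t : unitInterval), IsClf ((fun a => Φ (x, t, a)) '' F x)) ∧
    ∀ φ : ℂ → ℝ, Continuous φ → HasCompactSupport φ →
      Continuous (fun p : K × unitInterval => ∑ᶠ a ∈ F p.1, φ (Φ (p.1, p.2, a))) := by
  have hpush := param_push_vaguely_continuous_general (F := fun p : K × unitInterval => F p.1)
    (fun p => hF p.1) (fun φ hφ hφc => (hFc φ hφ hφc).comp continuous_fst)
    (hΦ.comp (Homeomorph.prodAssoc K unitInterval ℂ).continuous)
    fun _ => tendsto_cocompact_of_eq_off_compact hS fun p => hsupp p.1 p.2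
  exact ⟨fun x t => hpush.1 (x, t), hpush.2⟩
end
end

section
/- Let K be a compact topological space, let F : K → C^lf_∞(ℂ) be vaguely continuous, and let B ⊆ ℂ be a compact set such that F(x) ∩ ∂B = ∅ for every x ∈ K, where ∂B denotes the topological boundary of B. Then the function x ↦ #(F(x) ∩ B) ∈ ℕ is locally constant on K; in particular it is constant on every connected component of K. -/
open scoped Topology
open Filter

noncomputable section

/-!
If a net of locally finite sets converges vaguely, the number of points in a compact set can only
jump up in the limit and the number of points in an open set can only jump down: test against a
bump function lying above, respectively below, the indicator and agreeing with it on the limit set.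
Points off `∂B` lie in `B` exactly when they lie in `closure B`, and exactly when they lie in
`interior B`, so counting in `B` is both upper and lower semicontinuous, hence continuous into `ℕ`.
-/

open scoped CompactlySupported

section Counting

variable {α R : Type*} {A C : Set α}

lemma finsum_mem_le_finsum_mem [AddCommMonoid R] [PartialOrder R] [AddLeftMono R]
    {f g : α → R} (hf : (A ∩ f.support).Finite) (hg : (A ∩ g.support).Finite)
    (hfg : ∀ a ∈ A, f a ≤ g a) : ∑ᶠ a ∈ A, f a ≤ ∑ᶠ a ∈ A, g a := by
  rw [← Set.support_indicator] at hf hg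
  simpa only [finsum_mem_def] using
    finsum_le_finsum' hf hg fun a => Set.indicator_le_indicator' (hfg a)

lemma finsum_mem_indicator_one [AddCommMonoidWithOne R] (h : (A ∩ C).Finite) :
    ∑ᶠ a ∈ A, C.indicator (1 : α → R) a = (A ∩ C).ncard := by
  rw [finsum_mem_def, Set.indicator_indicator, ← finsum_mem_def, ← finsum_one,
    Nat.cast_finsum_mem h]
  simp only [Pi.one_apply, Nat.cast_one]

end Counting

lemma finite_inter_support {E β : Type*} [TopologicalSpace E] [TopologicalSpace β] [Zero β]
    {A : Set E} (hA : ∀ D, IsCompact D → (A ∩ D).Finite) (φ : C_c(E, β)) :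
    (A ∩ Function.support φ).Finite :=
  (hA _ φ.hasCompactSupport.isCompact).subset
    (Set.inter_subset_inter_right A (subset_tsupport φ))

section Semicontinuity

variable {E X : Type*} [TopologicalSpace E] [T2Space E] [LocallyCompactSpace E]
  [TopologicalSpace X] {A B C U : Set E} {F : X → Set E}

lemma exists_indicator_le_eqOn_of_isCompact (hA : ∀ D, IsCompact D → (A ∩ D).Finite)
    (hC : IsCompact C) :
    ∃ φ : C_c(E, ℝ), C.indicator 1 ≤ ⇑φ ∧ A.EqOn φ (C.indicator 1) := by
  obtain ⟨D, hD, hCD⟩ := exists_compact_superset hC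
  have hfin : ((A ∩ D) \ C).Finite := (hA D hD).subset Set.sdiff_subset
  have hdisj : Disjoint C ((A ∩ D) \ C ∪ (interior D)ᶜ) :=
    Set.disjoint_sdiff_right.union_right (Set.disjoint_compl_right_iff_subset.2 hCD)
  obtain ⟨f, hf1, hf0, hfc, hf01⟩ := exists_continuous_one_zero_of_isCompact hC
    (hfin.isClosed.union isOpen_interior.isClosed_compl) hdisj
  refine ⟨⟨f, hfc⟩, Set.indicator_le' (fun a ha => (hf1 ha).ge) fun a _ => (hf01 a).1,
    fun a ha => ?_⟩
  by_cases haC : a ∈ C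
  · simpa [haC] using hf1 haC
  · have hzero : a ∈ (A ∩ D) \ C ∪ (interior D)ᶜ := by
      by_cases haD : a ∈ interior D
      · exact .inl ⟨⟨ha, interior_subset haD⟩, haC⟩
      · exact .inr haD
    simpa [haC] using hf0 hzero

lemma exists_le_indicator_eqOn_of_isOpen (hU : IsOpen U) (hAU : (A ∩ U).Finite) :
    ∃ φ : C_c(E, ℝ), ⇑φ ≤ U.indicator 1 ∧ A.EqOn φ (U.indicator 1) := by
  obtain ⟨f, hf1, hf0, hfc, hf01⟩ := exists_continuous_one_zero_of_isCompact hAU.isCompact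
    hU.isClosed_compl (Set.disjoint_compl_right_iff_subset.2 Set.inter_subset_right)
  refine ⟨⟨f, hfc⟩, fun a => ?_, fun a ha => ?_⟩
  · by_cases haU : a ∈ U
    · simpa [haU] using (hf01 a).2
    · simpa [haU] using (hf0 haU).le
  · by_cases haU : a ∈ U
    · simpa [haU] using hf1 ⟨ha, haU⟩
    · simpa [haU] using hf0 haU

lemma upperSemicontinuous_ncard_inter (hF : ∀ x D, IsCompact D → (F x ∩ D).Finite)
    (hFc : ∀ φ : C_c(E, ℝ), Continuous fun x => ∑ᶠ a ∈ F x, φ a) (hC : IsCompact C) :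
    UpperSemicontinuous fun x => (F x ∩ C).ncard := by
  intro x n hn
  obtain ⟨φ, hφ, hφx⟩ := exists_indicator_le_eqOn_of_isCompact (hF x) hC
  have hlt : ∑ᶠ a ∈ F x, φ a < (n : ℝ) := by
    rw [finsum_mem_congr rfl hφx, finsum_mem_indicator_one (hF x C hC)]
    exact_mod_cast hn
  filter_upwards [(hFc φ).continuousAt.eventually_lt_const hlt] with y hy
  have hle : ((F y ∩ C).ncard : ℝ) ≤ ∑ᶠ a ∈ F y, φ a := by
    rw [← finsum_mem_indicator_one (hF y C hC)]
    exact finsum_mem_le_finsum_mem ((hF y C hC).subset (by simp))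
      (finite_inter_support (hF y) φ) fun a _ => hφ a
  exact_mod_cast hle.trans_lt hy

lemma lowerSemicontinuous_ncard_inter (hF : ∀ x D, IsCompact D → (F x ∩ D).Finite)
    (hFc : ∀ φ : C_c(E, ℝ), Continuous fun x => ∑ᶠ a ∈ F x, φ a) (hU : IsOpen U)
    (hFU : ∀ x, (F x ∩ U).Finite) :
    LowerSemicontinuous fun x => (F x ∩ U).ncard := by
  intro x n hn
  obtain ⟨φ, hφ, hφx⟩ := exists_le_indicator_eqOn_of_isOpen hU (hFU x)
  have hlt : (n : ℝ) < ∑ᶠ a ∈ F x, φ a := by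
    rw [finsum_mem_congr rfl hφx, finsum_mem_indicator_one (hFU x)]
    exact_mod_cast hn
  filter_upwards [(hFc φ).continuousAt.eventually_const_lt hlt] with y hy
  have hle : ∑ᶠ a ∈ F y, φ a ≤ ((F y ∩ U).ncard : ℝ) := by
    rw [← finsum_mem_indicator_one (hFU y)]
    exact finsum_mem_le_finsum_mem (finite_inter_support (hF y) φ)
      ((hFU y).subset (by simp)) fun a _ => hφ a
  exact_mod_cast hy.trans_le hle

theorem count_locally_constant_general (hF : ∀ x D, IsCompact D → (F x ∩ D).Finite)
    (hFc : ∀ φ : C_c(E, ℝ), Continuous fun x => ∑ᶠ a ∈ F x, φ a)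
    (hB : IsCompact (closure B)) (hbd : ∀ x, F x ∩ frontier B = ∅) :
    IsLocallyConstant fun x => (F x ∩ B).ncard := by
  have hclosure : ∀ x, F x ∩ closure B = F x ∩ B := fun x => by
    rw [closure_eq_self_union_frontier, Set.inter_union_distrib_left, hbd, Set.union_empty]
  have hinterior : ∀ x, F x ∩ interior B = F x ∩ B := fun x => by
    rw [← self_sdiff_frontier, ← Set.inter_sdiff_assoc, Set.inter_sdiff_right_comm,
      sdiff_eq_left.2 (Set.disjoint_iff_inter_eq_empty.2 (hbd x))]
  have hupper := upperSemicontinuous_ncard_inter hF hFc hB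
  have hlower := lowerSemicontinuous_ncard_inter hF hFc isOpen_interior fun x =>
    (hF x _ hB).subset (Set.inter_subset_inter_right _ interior_subset_closure)
  simp only [hclosure] at hupper
  simp only [hinterior] at hlower
  rw [IsLocallyConstant.iff_continuous]
  exact continuous_iff_lower_upperSemicontinuous.2 ⟨hlower, hupper⟩

end Semicontinuity

/-- If `F : K → C^lf_∞(ℂ)` is vaguely continuous on a compact space `K` and the compact
set `B ⊆ ℂ` satisfies `F(x) ∩ ∂B = ∅` for all `x`, then `x ↦ #(F(x) ∩ B)` is locally
constant; in particular it is constant on connected components. -/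
theorem count_locally_constant (K : Type*) [TopologicalSpace K] [CompactSpace K]
    (F : K → Set ℂ) (hF : ∀ x, IsClf (F x)) (hFc : VaguelyContinuous F)
    (B : Set ℂ) (hB : IsCompact B)
    (hbd : ∀ x : K, F x ∩ frontier B = ∅) :
    IsLocallyConstant (fun x : K => (F x ∩ B).ncard) ∧
    ∀ x y : K, y ∈ connectedComponent x → (F x ∩ B).ncard = (F y ∩ B).ncard := by
  have hconst := count_locally_constant_general (fun x => (hF x).2.2)
    (fun φ => hFc φ φ.continuous φ.hasCompactSupport) (by rwa [hB.isClosed.closure_eq]) hbd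
  exact ⟨hconst, fun _ _ => hconst.apply_eq_of_isPreconnected
    isPreconnected_connectedComponent mem_connectedComponent⟩
end
end

section
/- Let Y be a Hausdorff topological space and let F : Y → C^lf_∞(ℂ) be vaguely continuous. Then the incidence set E_F := {(y, z) ∈ Y × ℂ : z ∈ F(y)} is closed in Y × ℂ. -/
open scoped Topology
open Filter

noncomputable section

/-!
Let `φ ≥ 0` be a test function vanishing on `F y` with `φ z = 1`, where `z ∉ F y`. Any `z' ∈ F y'`
contributes the term `φ z'` to the sum of `φ` over `F y'`, so the open set of `(y', z')` for which
`φ z'` exceeds this sum is a neighbourhood of `(y, z)` disjoint from the incidence set.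
-/

theorem isClosed_of_finite_inter_isCompact {X : Type*} [TopologicalSpace X] [T1Space X]
    [CompactlyCoherentSpace X] {A : Set X} (hA : ∀ K, IsCompact K → (A ∩ K).Finite) :
    IsClosed A := by
  rw [CompactlyCoherentSpace.isClosed_iff]
  intro K hK
  rw [← Subtype.preimage_coe_inter_self]
  exact (hA K hK).isClosed.preimage continuous_subtype_val

theorem single_le_finsum_mem {α M : Type*} [AddCommMonoid M] [Preorder M] [IsOrderedAddMonoid M]
    {s : Set α} {f : α → M} {a : α} (ha : a ∈ s) (hs : (s ∩ Function.support f).Finite)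
    (hf : ∀ b ∈ s, 0 ≤ f b) : f a ≤ ∑ᶠ b ∈ s, f b := by
  have h_support : (s.indicator f).HasFiniteSupport := by
    rwa [Function.HasFiniteSupport, Set.support_indicator]
  rw [finsum_mem_def, ← Set.indicator_of_mem ha f]
  exact single_le_finsum a h_support (Set.indicator_nonneg hf)

theorem incidence_set_closed_general {Y X : Type*} [TopologicalSpace Y] [TopologicalSpace X]
    [T2Space X] [LocallyCompactSpace X] {F : Y → Set X}
    (hF : ∀ y K, IsCompact K → (F y ∩ K).Finite)
    (hFc : ∀ φ : X → ℝ, Continuous φ → HasCompactSupport φ →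
      Continuous fun y => ∑ᶠ a ∈ F y, φ a) :
    IsClosed {p : Y × X | p.2 ∈ F p.1} := by
  rw [← isOpen_compl_iff, isOpen_iff_mem_nhds]
  rintro ⟨y, z⟩ (hz : z ∉ F y)
  obtain ⟨φ, hφ_one, hφ_zero, hφ_supp, hφ_mem⟩ :=
    exists_continuous_one_zero_of_isCompact isCompact_singleton
      (isClosed_of_finite_inter_isCompact (hF y)) (Set.disjoint_singleton_left.2 hz)
  have h_open : IsOpen {p : Y × X | ∑ᶠ a ∈ F p.1, φ a < φ p.2} :=
    isOpen_lt ((hFc φ φ.continuous hφ_supp).comp continuous_fst) (φ.continuous.comp continuous_snd)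
  have h_base : ∑ᶠ a ∈ F y, φ a < φ z := by
    rw [finsum_mem_eq_zero_of_forall_eq_zero hφ_zero, hφ_one rfl]
    exact zero_lt_one
  filter_upwards [h_open.mem_nhds h_base] with p hp_lt hp_mem
  have h_finite : (F p.1 ∩ Function.support φ).Finite :=
    (hF p.1 _ hφ_supp).subset (Set.inter_subset_inter_right _ (subset_tsupport φ))
  exact hp_lt.not_ge (single_le_finsum_mem hp_mem h_finite fun a _ => (hφ_mem a).1)

/-- If `Y` is Hausdorff and `F : Y → C^lf_∞(ℂ)` is vaguely continuous, then the incidence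
set `E_F = {(y,z) : z ∈ F(y)}` is closed in `Y × ℂ`. -/
theorem incidence_set_closed (Y : Type*) [TopologicalSpace Y] [T2Space Y]
    (F : Y → Set ℂ) (hF : ∀ y, IsClf (F y)) (hFc : VaguelyContinuous F) :
    IsClosed {p : Y × ℂ | p.2 ∈ F p.1} :=
  incidence_set_closed_general (fun y => (hF y).2.2) hFc
end
end

section
/- Let X be a topological space and let E ⊆ X × ℂ be a closed subset such that the restriction to E of the first projection is a covering map onto X. Let U ⊆ X be open and let s_n : U → ℂ (n ∈ ℕ) be continuous functions with s_n(x) ≠ s_m(x) for all x ∈ U and n ≠ m, such that E ∩ (U × ℂ) = ⋃_{n∈ℕ} {(x, s_n(x)) : x ∈ U}. Then for every compact set K ⊆ U and every R > 0 there exists N ∈ ℕ such that |s_n(x)| > R for all x ∈ K and all n ≥ N; equivalently, only finitely many of the graphs {(x, s_n(x)) : x ∈ U} meet K × {z ∈ ℂ : |z| ≤ R}. -/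
/-!
Near a point `(x, s m x)` of `E` the projection is injective on `E`, and by continuity the graph of
`s m` stays near that point, so no other sheet comes near it. Near a point off the closed set `E`
there is no sheet at all. Hence every point over `U` has a neighbourhood missed by all but finitely
many sheets, and by compactness all but finitely many sheets miss `K ×ˢ L` for compact `K ⊆ U`
and `L`.
-/

open Filter Set Topology

theorem exists_mem_nhds_injOn_inter {X Y : Type*} [TopologicalSpace X] {f : X → Y} {A : Set X}
    (hf : IsLocallyInjective fun a : A => f a) {x : X} (hx : x ∈ A) :
    ∃ V ∈ 𝓝 x, InjOn f (A ∩ V) := by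
  obtain ⟨W, hWopen, hxW, hinj⟩ := hf ⟨x, hx⟩
  obtain ⟨V, hVopen, rfl⟩ := isOpen_induced_iff.1 hWopen
  exact ⟨V, hVopen.mem_nhds hxW, fun a ha b hb hab =>
    congrArg Subtype.val (@hinj ⟨a, ha.1⟩ ha.2 ⟨b, hb.1⟩ hb.2 hab)⟩

section Sheets

variable {X Y : Type*} [TopologicalSpace X] [TopologicalSpace Y] {E : Set (X × Y)} {U : Set X}

theorem eventually_nhdsWithin_mem_graphOn (hproj : IsLocallyInjective fun e : E => e.1.1)
    {f : X → Y} (hfE : U.graphOn f ⊆ E) {x : X} (hx : x ∈ U) (hf : ContinuousWithinAt f U x) :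
    ∀ᶠ q in 𝓝[E] (x, f x), q.1 ∈ U → q ∈ U.graphOn f := by
  obtain ⟨V, hV, hinj⟩ := exists_mem_nhds_injOn_inter hproj (hfE (mem_image_of_mem _ hx))
  have hgraph_mem : ∀ᶠ y in 𝓝 x, y ∈ U → (y, f y) ∈ V :=
    eventually_nhdsWithin_iff.1 ((continuousWithinAt_id.prodMk hf).eventually_mem hV)
  have hgraph_mem_fst : ∀ᶠ q in 𝓝 (x, f x), q.1 ∈ U → (q.1, f q.1) ∈ V :=
    hgraph_mem.prod_inl_nhds (f x)
  filter_upwards [self_mem_nhdsWithin, mem_nhdsWithin_of_mem_nhds hV,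
    mem_nhdsWithin_of_mem_nhds hgraph_mem_fst] with q hqE hqV hq hqU
  have hfq : (q.1, f q.1) ∈ U.graphOn f := mem_image_of_mem _ hqU
  rwa [← hinj ⟨hfE hfq, hq hqU⟩ ⟨hqE, hqV⟩ rfl]

variable {ι : Type*} {s : ι → X → Y}

theorem eventually_cofinite_prod_nhds_notMem_graphOn (hEclosed : IsClosed E)
    (hproj : IsLocallyInjective fun e : E => e.1.1) (hscont : ∀ i, ContinuousOn (s i) U)
    (hsinj : ∀ x ∈ U, Function.Injective fun i => s i x)
    (hgraph : ∀ x ∈ U, ∀ y, (x, y) ∈ E ↔ ∃ i, y = s i x) {x : X} (hx : x ∈ U) (y : Y) :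
    ∀ᶠ r in cofinite ×ˢ 𝓝 (x, y), r.2 ∉ U.graphOn (s r.1) := by
  have hsE (i : ι) : U.graphOn (s i) ⊆ E := by
    rintro _ ⟨a, ha, rfl⟩
    exact (hgraph a ha _).2 ⟨i, rfl⟩
  by_cases hxy : (x, y) ∈ E
  · obtain ⟨m, rfl⟩ := (hgraph x hx y).1 hxy
    have hmem_sheet : ∀ᶠ q in 𝓝 (x, s m x), q ∈ E → q.1 ∈ U → q ∈ U.graphOn (s m) :=
      eventually_nhdsWithin_iff.1
        (eventually_nhdsWithin_mem_graphOn hproj (hsE m) hx (hscont m x hx))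
    filter_upwards [(eventually_cofinite_ne m).prod_mk hmem_sheet]
    rintro ⟨i, q⟩ ⟨him, hq⟩ hqi
    obtain ⟨hqU, hsi⟩ := mem_graphOn.1 hqi
    have hsm : s m q.1 = q.2 := (mem_graphOn.1 (hq (hsE i hqi) hqU)).2
    exact him (hsinj q.1 hqU (hsi.trans hsm.symm))
  · filter_upwards [(hEclosed.isOpen_compl.eventually_mem hxy).prod_inr cofinite] with r hr
    exact fun hmem => hr (hsE r.1 hmem)

theorem sheets_escape_uniformly_general (hEclosed : IsClosed E)
    (hproj : IsLocallyInjective fun e : E => e.1.1) (hscont : ∀ i, ContinuousOn (s i) U)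
    (hsinj : ∀ x ∈ U, Function.Injective fun i => s i x)
    (hgraph : ∀ x ∈ U, ∀ y, (x, y) ∈ E ↔ ∃ i, y = s i x)
    {K : Set X} (hK : IsCompact K) (hKU : K ⊆ U) {L : Set Y} (hL : IsCompact L) :
    ∀ᶠ i in cofinite, ∀ x ∈ K, s i x ∉ L := by
  have hmissed : ∀ᶠ r in cofinite ×ˢ 𝓝ˢ (K ×ˢ L), r.2 ∉ U.graphOn (s r.1) :=
    (hK.prod hL).mem_prod_nhdsSet_of_forall fun p hp =>
      eventually_cofinite_prod_nhds_notMem_graphOn hEclosed hproj hscont hsinj hgraph (hKU hp.1) p.2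
  filter_upwards [hmissed.curry] with i hi x hx hsx
  exact hi.self_of_nhdsSet (x, s i x) ⟨hx, hsx⟩ (mem_image_of_mem _ (hKU hx))

end Sheets

/-- Uniform escape of sheets: let `E ⊆ X × ℂ` be closed with the first projection
restricting to a covering map of `X`, and suppose over an open `U ⊆ X` the set `E` is the
disjoint union of the graphs of continuous functions `s_n : U → ℂ` with pairwise distinct
values.  Then for every compact `K ⊆ U` and every `R > 0` there is `N` with
`|s_n(x)| > R` for all `x ∈ K`, `n ≥ N`. -/
theorem sheets_escape_uniformly (X : Type*) [TopologicalSpace X]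
    (E : Set (X × ℂ)) (hEclosed : IsClosed E)
    (hcov : IsCoveringMap (fun e : E => e.1.1))
    (hsurj : Function.Surjective (fun e : E => e.1.1))
    (U : Set X) (hU : IsOpen U) (s : ℕ → X → ℂ)
    (hscont : ∀ n, ContinuousOn (s n) U)
    (hdisj : ∀ x ∈ U, ∀ n m : ℕ, n ≠ m → s n x ≠ s m x)
    (hgraph : ∀ x ∈ U, ∀ z : ℂ, (x, z) ∈ E ↔ ∃ n, z = s n x)
    (K : Set X) (hK : IsCompact K) (hKU : K ⊆ U) (R : ℝ) (hR : 0 < R) :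
    ∃ N : ℕ, ∀ x ∈ K, ∀ n, N ≤ n → R < ‖s n x‖ := by
  obtain ⟨N, hN⟩ := eventually_atTop.1 <| Nat.cofinite_eq_atTop ▸
    sheets_escape_uniformly_general hEclosed hcov.isLocalHomeomorph.isLocallyInjective hscont
      (fun x hx n m => not_imp_not.1 (hdisj x hx n m)) hgraph hK hKU (isCompact_closedBall 0 R)
  exact ⟨N, fun x hx n hn => by simpa using hN n hn x hx⟩
end

section
/- Let X be a topological space and let E ⊆ X × ℂ be a closed subset such that the restriction to E of the first projection is a covering map onto X. Let U ⊆ X be open and let s_n : U → ℂ (n ≥ 1) be continuous functions with s_n(x) ≠ s_m(x) for all x ∈ U and n ≠ m, such that E ∩ (U × ℂ) = ⋃_{n≥1} {(x, s_n(x)) : x ∈ U}. Assume there exists c ∈ ℂ with c ≠ s_n(x) for all x ∈ U and all n. Define the Weierstrass elementary factor E_n(w) = (1 − w)·exp(∑_{j=1}^{n} w^j / j). Then the infinite product F_U(x, z) = ∏_{n=1}^{∞} E_n((z − c)/(s_n(x) − c)) converges locally uniformly on U × ℂ; F_U is continuous on U × ℂ; for each x ∈ U the function z ↦ F_U(x,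 z) is entire; and for each x ∈ U the zeros of z ↦ F_U(x, z) are exactly the points s_n(x), n ≥ 1, each a simple zero (zero of order one). -/
open Filter

noncomputable section

/-- The Weierstrass elementary factor `E_p(w) = (1 - w)·exp(∑_{j=1}^{p} w^j / j)`. -/
def wfactor (p : ℕ) (w : ℂ) : ℂ :=
  (1 - w) * Complex.exp (∑ j ∈ Finset.range p, w ^ (j + 1) / ((j : ℂ) + 1))

/-!
Near a point `(x₀, z₀)` of `E` local injectivity of the projection leaves room for one section
only, and near a point outside the closed set `E` there is none; by compactness, only finitely many
of the `s_n` meet a given compact set over a neighbourhood of `x₀`. Hence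
`(z - c) / (s_n(x) - c) → 0` locally uniformly, and `|E_n(w) - 1| ≤ 4 |w|^(n+1)` for `|w| ≤ 1/2`
bounds the product by a geometric series. At a zero exactly one factor vanishes, to first order,
while the product of the others is holomorphic and nonzero there.
-/

open scoped Topology

lemma logTaylor_neg_eq_neg_sum (p : ℕ) (w : ℂ) :
    Complex.logTaylor (p + 1) (-w) = -∑ j ∈ Finset.range p, w ^ (j + 1) / ((j : ℂ) + 1) := by
  have cancel_signs (j : ℕ) : (-1 : ℂ) ^ (j + 1 + 1) * (-w) ^ (j + 1) = -w ^ (j + 1) := by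
    rw [pow_succ (-1 : ℂ), mul_right_comm, ← mul_pow, neg_one_mul, neg_neg, mul_neg_one]
  simp only [Complex.logTaylor, Finset.sum_range_succ', cancel_signs, neg_div,
    Finset.sum_neg_distrib, Nat.cast_zero, div_zero, add_zero, Nat.cast_add, Nat.cast_one]

lemma wfactor_eq_exp_log_sub_logTaylor (p : ℕ) {w : ℂ} (hw : w ≠ 1) :
    wfactor p w = Complex.exp (Complex.log (1 + -w) - Complex.logTaylor (p + 1) (-w)) := by
  have hw' : 1 + -w ≠ 0 := by rwa [← sub_eq_add_neg, sub_ne_zero, ne_comm]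
  rw [logTaylor_neg_eq_neg_sum, sub_neg_eq_add, Complex.exp_add, Complex.exp_log hw', wfactor,
    sub_eq_add_neg]

lemma norm_wfactor_sub_one_le (p : ℕ) {w : ℂ} (hw : ‖w‖ ≤ 1 / 2) :
    ‖wfactor p w - 1‖ ≤ 4 * ‖w‖ ^ (p + 1) := by
  have hw1 : w ≠ 1 := by
    rintro rfl
    norm_num at hw
  have norm_log_le : ‖Complex.log (1 + -w) - Complex.logTaylor (p + 1) (-w)‖
      ≤ 2 * ‖w‖ ^ (p + 1) := by
    have inv_le_two : (1 - ‖w‖)⁻¹ ≤ 2 := by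
      rw [inv_le_comm₀ (by linarith) two_pos]
      linarith
    calc ‖Complex.log (1 + -w) - Complex.logTaylor (p + 1) (-w)‖
        ≤ ‖w‖ ^ (p + 1) * (1 - ‖w‖)⁻¹ / (p + 1) := by
          simpa only [norm_neg] using
            Complex.norm_log_sub_logTaylor_le p (z := -w) (by rw [norm_neg]; linarith)
      _ ≤ ‖w‖ ^ (p + 1) * (1 - ‖w‖)⁻¹ :=
          div_le_self (mul_nonneg (by positivity) (inv_nonneg.2 (by linarith)))
            (le_add_of_nonneg_left p.cast_nonneg)
      _ ≤ ‖w‖ ^ (p + 1) * 2 := by gcongr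
      _ = 2 * ‖w‖ ^ (p + 1) := mul_comm _ _
  have norm_log_le_one : ‖Complex.log (1 + -w) - Complex.logTaylor (p + 1) (-w)‖ ≤ 1 := by
    have : ‖w‖ ^ (p + 1) ≤ ‖w‖ := pow_le_of_le_one (norm_nonneg w) (by linarith) p.succ_ne_zero
    linarith
  rw [wfactor_eq_exp_log_sub_logTaylor p hw1]
  linarith [Complex.norm_exp_sub_one_le norm_log_le_one]

lemma wfactor_eq_zero_iff {p : ℕ} {w : ℂ} : wfactor p w = 0 ↔ w = 1 := by
  rw [wfactor, mul_eq_zero, or_iff_left (Complex.exp_ne_zero _), sub_eq_zero, eq_comm]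

lemma hasDerivAt_wfactor (p : ℕ) (w : ℂ) :
    HasDerivAt (wfactor p)
      (-w ^ p * Complex.exp (∑ j ∈ Finset.range p, w ^ (j + 1) / ((j : ℂ) + 1))) w := by
  have hasDerivAt_term (j : ℕ) :
      HasDerivAt (fun w : ℂ => w ^ (j + 1) / ((j : ℂ) + 1)) (w ^ j) w := by
    have hj : (j : ℂ) + 1 ≠ 0 := j.cast_add_one_ne_zero
    simpa [mul_div_cancel_left₀ _ hj] using (hasDerivAt_pow (j + 1) w).div_const ((j : ℂ) + 1)
  have hasDerivAt_exp_sum :=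
    (HasDerivAt.fun_sum (u := Finset.range p) fun j _ => hasDerivAt_term j).cexp
  refine (((hasDerivAt_id w).const_sub 1).mul hasDerivAt_exp_sum).congr_deriv ?_
  simp only [id_eq]
  linear_combination Complex.exp (∑ j ∈ Finset.range p, w ^ (j + 1) / ((j : ℂ) + 1)) *
    mul_neg_geom_sum w p

lemma differentiable_wfactor (p : ℕ) : Differentiable ℂ (wfactor p) :=
  fun w => (hasDerivAt_wfactor p w).differentiableAt

lemma deriv_wfactor_one_ne_zero (p : ℕ) : deriv (wfactor p) 1 ≠ 0 := by
  rw [(hasDerivAt_wfactor p 1).deriv]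
  simp [Complex.exp_ne_zero]

/-- The product `∏ i, f i` converges normally near every point of `S`: each `x ∈ S` has a
neighbourhood within `S` on which `‖f i - 1‖` is bounded, for all `i` at once, by the terms of a
summable family of constants. -/
def LocallyNormallyMultipliableOn {ι α R : Type*} [TopologicalSpace α] [NormedCommRing R]
    (f : ι → α → R) (S : Set α) : Prop :=
  ∀ x ∈ S, ∃ u : ι → ℝ, Summable u ∧ ∀ᶠ y in 𝓝[S] x, ∀ i, ‖f i y - 1‖ ≤ u i

namespace LocallyNormallyMultipliableOn

section NormedRing

variable {ι κ α β R : Type*} [TopologicalSpace α] [TopologicalSpace β] [NormedCommRing R]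
  {f : ι → α → R} {S : Set α}

lemma of_eventually_cofinite (hc : ∀ i, ContinuousOn (f i) S)
    (h : ∀ x ∈ S, ∃ u : ι → ℝ, Summable u ∧
      ∀ᶠ q in cofinite ×ˢ 𝓝[S] x, ‖f q.1 q.2 - 1‖ ≤ u q.1) :
    LocallyNormallyMultipliableOn f S := by
  classical
  intro x hx
  obtain ⟨u, hu, hbound⟩ := h x hx
  obtain ⟨P, hP, Q, hQ, hPQ⟩ := eventually_prod_iff.1 hbound
  refine ⟨fun i => if P i then u i else ‖f i x - 1‖ + 1, hu.congr_cofinite ?_, ?_⟩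
  · filter_upwards [hP] with i hi using (if_pos hi).symm
  · have exceptional_bound : ∀ᶠ y in 𝓝[S] x, ∀ i ∈ {i | ¬P i}, ‖f i y - 1‖ < ‖f i x - 1‖ + 1 :=
      (eventually_all_finite (eventually_cofinite.1 hP)).2 fun i _ =>
        ((hc i x hx).sub continuousWithinAt_const).norm.eventually_lt_const (lt_add_one _)
    filter_upwards [hQ, exceptional_bound] with y hy hexc i
    split_ifs with hi
    · exact hPQ hi hy
    · exact (hexc i hi).le

lemma comp_injective (h : LocallyNormallyMultipliableOn f S) {e : κ → ι}
    (he : Function.Injective e) : LocallyNormallyMultipliableOn (fun k => f (e k)) S := by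
  intro x hx
  obtain ⟨u, hu, hbound⟩ := h x hx
  exact ⟨u ∘ e, hu.comp_injective he, hbound.mono fun y hy k => hy (e k)⟩

lemma comp_continuousOn (h : LocallyNormallyMultipliableOn f S) {g : β → α} {T : Set β}
    (hg : ContinuousOn g T) (hgT : Set.MapsTo g T S) :
    LocallyNormallyMultipliableOn (fun i y => f i (g y)) T := by
  intro y hy
  obtain ⟨u, hu, hbound⟩ := h (g y) (hgT hy)
  exact ⟨u, hu, ((hg y hy).tendsto_nhdsWithin hgT).eventually hbound⟩

lemma summable_norm_sub_one (h : LocallyNormallyMultipliableOn f S) {x : α} (hx : x ∈ S) :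
    Summable fun i => ‖f i x - 1‖ := by
  obtain ⟨u, hu, hbound⟩ := h x hx
  exact hu.of_nonneg_of_le (fun _ => norm_nonneg _) (hbound.self_of_nhdsWithin hx)

variable [NormOneClass R] [CompleteSpace R]

lemma multipliable (h : LocallyNormallyMultipliableOn f S) {x : α} (hx : x ∈ S) :
    Multipliable fun i => f i x := by
  simpa only [add_sub_cancel] using multipliable_one_add_of_summable (h.summable_norm_sub_one hx)

-- The partial products are full products of the factors truncated to `1`, so dominated convergence
-- gives their joint limit in the index and the point, without any compactness of neighbourhoods.
lemma tendsto_prod_nhdsWithin (h : LocallyNormallyMultipliableOn f S)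
    (hc : ∀ i, ContinuousOn (f i) S) {x : α} (hx : x ∈ S) :
    Tendsto (fun q : Finset ι × α => ∏ i ∈ q.1, f i q.2) (atTop ×ˢ 𝓝[S] x)
      (𝓝 (∏' i, f i x)) := by
  classical
  obtain ⟨u, hu, hbound⟩ := h x hx
  have hu0 (i : ι) : 0 ≤ u i := (norm_nonneg _).trans (hbound.self_of_nhdsWithin hx i)
  have truncated_tendsto (i : ι) :
      Tendsto (fun q : Finset ι × α => if i ∈ q.1 then f i q.2 - 1 else 0) (atTop ×ˢ 𝓝[S] x)
        (𝓝 (f i x - 1)) := by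
    refine (((hc i x hx).sub_const 1).comp tendsto_snd).congr' ?_
    filter_upwards [tendsto_fst.eventually (eventually_ge_atTop {i})] with q hq
    exact (if_pos (Finset.singleton_subset_iff.1 hq)).symm
  have truncated_bound : ∀ᶠ q : Finset ι × α in atTop ×ˢ 𝓝[S] x,
      ∀ i, ‖if i ∈ q.1 then f i q.2 - 1 else 0‖ ≤ u i := by
    filter_upwards [tendsto_snd.eventually hbound] with q hq i
    split_ifs
    · exact hq i
    · simpa using hu0 i
  have tendsto_truncated :=
    tendsto_tprod_one_add_of_dominated_convergence hu truncated_tendsto truncated_bound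
  simp only [add_sub_cancel] at tendsto_truncated
  refine tendsto_truncated.congr fun q => ?_
  rw [tprod_eq_prod (s := q.1) fun i hi => by rw [if_neg hi, add_zero]]
  exact Finset.prod_congr rfl fun i hi => by rw [if_pos hi, add_sub_cancel]

lemma continuousOn_tprod (h : LocallyNormallyMultipliableOn f S)
    (hc : ∀ i, ContinuousOn (f i) S) : ContinuousOn (fun x => ∏' i, f i x) S := by
  intro x hx
  obtain ⟨u, hu, hbound⟩ := h x hx
  have tendsto_tprod := tendsto_tprod_one_add_of_dominated_convergence hu
    (fun i => (hc i x hx).sub_const 1) hbound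
  simp only [add_sub_cancel] at tendsto_tprod
  exact tendsto_tprod

theorem hasProdLocallyUniformlyOn (h : LocallyNormallyMultipliableOn f S)
    (hc : ∀ i, ContinuousOn (f i) S) :
    HasProdLocallyUniformlyOn f (fun x => ∏' i, f i x) S := by
  refine tendstoLocallyUniformlyOn_iff_forall_tendsto.2 fun x hx => ?_
  refine Tendsto.mono_right ?_ (nhds_le_uniformity (∏' i, f i x))
  rw [nhds_prod_eq]
  exact ((h.continuousOn_tprod hc x hx).tendsto.comp tendsto_snd).prodMk
    (h.tendsto_prod_nhdsWithin hc hx)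

lemma tprod_eq_zero_iff [NormMulClass R] (h : LocallyNormallyMultipliableOn f S) {x : α}
    (hx : x ∈ S) : ∏' i, f i x = 0 ↔ ∃ i, f i x = 0 := by
  refine ⟨fun hzero => ?_, tprod_of_exists_eq_zero⟩
  contrapose! hzero
  simpa only [add_sub_cancel] using tprod_one_add_ne_zero_of_summable
    (f := fun i => f i x - 1) (by simpa only [add_sub_cancel] using hzero)
    (h.summable_norm_sub_one hx)

lemma tprod_eq_mul_tprod_compl (h : LocallyNormallyMultipliableOn f S) (i : ι) {x : α}
    (hx : x ∈ S) : ∏' j, f j x = f i x * ∏' j : ({i}ᶜ : Set ι), f j x := by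
  rw [← tprod_singleton i fun j => f j x]
  exact (Multipliable.tprod_mul_tprod_compl (f := fun j => f j x) .of_finite
    ((h.comp_injective Subtype.val_injective).multipliable hx)).symm

end NormedRing

section Holomorphic

variable {ι : Type*} {f : ι → ℂ → ℂ} {S : Set ℂ}

lemma differentiableOn_tprod (h : LocallyNormallyMultipliableOn f S) (hS : IsOpen S)
    (hd : ∀ i, DifferentiableOn ℂ (f i) S) : DifferentiableOn ℂ (fun z => ∏' i, f i z) S :=
  (h.hasProdLocallyUniformlyOn fun i => (hd i).continuousOn).differentiableOn
    (.of_forall fun _ => DifferentiableOn.fun_finsetProd fun i _ => hd i) hS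

theorem deriv_tprod_ne_zero (h : LocallyNormallyMultipliableOn f S) (hS : IsOpen S)
    (hd : ∀ i, DifferentiableOn ℂ (f i) S) {z : ℂ} (hz : z ∈ S) {i : ι} (hi : f i z = 0)
    (hi' : deriv (f i) z ≠ 0) (hne : ∀ j ≠ i, f j z ≠ 0) :
    deriv (fun w => ∏' j, f j w) z ≠ 0 := by
  have hrest := h.comp_injective (Subtype.val_injective (p := (· ∈ ({i}ᶜ : Set ι))))
  have rest_ne_zero : ∏' j : ({i}ᶜ : Set ι), f j z ≠ 0 := by
    rw [Ne, hrest.tprod_eq_zero_iff hz]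
    rintro ⟨⟨j, hj⟩, hjz⟩
    exact hne j hj hjz
  have factored : (fun w => ∏' j, f j w) =ᶠ[𝓝 z] fun w => f i w * ∏' j : ({i}ᶜ : Set ι), f j w :=
    (hS.eventually_mem hz).mono fun w hw => h.tprod_eq_mul_tprod_compl i hw
  rw [factored.deriv_eq, deriv_fun_mul ((hd i).differentiableAt (hS.mem_nhds hz))
    ((hrest.differentiableOn_tprod hS fun j => hd j).differentiableAt (hS.mem_nhds hz)),
    hi, zero_mul, add_zero]
  exact mul_ne_zero hi' rest_ne_zero

end Holomorphic

end LocallyNormallyMultipliableOn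

theorem locallyNormallyMultipliableOn_wfactor {α : Type*} [TopologicalSpace α] {S : Set α}
    {p : ℕ → ℕ} (hp : ∀ n, n ≤ p n) {w : ℕ → α → ℂ} (hw : ∀ n, ContinuousOn (w n) S)
    (hw0 : ∀ x ∈ S, Tendsto (Function.uncurry w) (atTop ×ˢ 𝓝[S] x) (𝓝 0)) :
    LocallyNormallyMultipliableOn (fun n x => wfactor (p n) (w n x)) S := by
  refine .of_eventually_cofinite
    (fun n => (differentiable_wfactor (p n)).continuous.comp_continuousOn (hw n)) fun x hx =>
      ⟨fun n => 4 * (1 / 2) ^ n, summable_geometric_two.mul_left 4, ?_⟩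
  rw [Nat.cofinite_eq_atTop]
  have norm_le_half : ∀ᶠ q in atTop ×ˢ 𝓝[S] x, ‖w q.1 q.2‖ ≤ 1 / 2 :=
    (tendsto_zero_iff_norm_tendsto_zero.1 (hw0 x hx)).eventually_le_const one_half_pos
  filter_upwards [norm_le_half] with q hq
  calc ‖wfactor (p q.1) (w q.1 q.2) - 1‖
      ≤ 4 * ‖w q.1 q.2‖ ^ (p q.1 + 1) := norm_wfactor_sub_one_le _ hq
    _ ≤ 4 * (1 / 2) ^ (p q.1 + 1) := by gcongr
    _ ≤ 4 * (1 / 2) ^ q.1 := by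
        gcongr 4 * ?_
        exact pow_le_pow_of_le_one one_half_pos.le one_half_lt_one.le
          ((hp q.1).trans (Nat.le_succ _))

/-- The factor `E_{n+1}((z - c) / (s_{n+1}(x) - c))` of the product `F_U`, as a function of
`(x, z)`. -/
def graphFactor {X : Type*} (s : ℕ → X → ℂ) (c : ℂ) (n : ℕ) (q : X × ℂ) : ℂ :=
  wfactor (n + 1) ((q.2 - c) / (s n q.1 - c))

section graphFactor

variable {X : Type*} {s : ℕ → X → ℂ} {c : ℂ} {n : ℕ} {x : X}

lemma graphFactor_eq_zero_iff (hc : s n x ≠ c) {z : ℂ} :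
    graphFactor s c n (x, z) = 0 ↔ z = s n x := by
  rw [graphFactor, wfactor_eq_zero_iff, div_eq_one_iff_eq (sub_ne_zero.2 hc), sub_left_inj]

variable (s c n x) in
lemma differentiable_graphFactor : Differentiable ℂ fun z => graphFactor s c n (x, z) :=
  (differentiable_wfactor (n + 1)).comp ((differentiable_id.sub_const c).div_const (s n x - c))

lemma deriv_graphFactor_ne_zero (hc : s n x ≠ c) :
    deriv (fun z => graphFactor s c n (x, z)) (s n x) ≠ 0 := by
  have hc' : s n x - c ≠ 0 := sub_ne_zero.2 hc
  have hquot : HasDerivAt (fun z => (z - c) / (s n x - c)) (1 / (s n x - c)) (s n x) :=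
    ((hasDerivAt_id _).sub_const c).div_const _
  have hfactor : HasDerivAt (wfactor (n + 1)) (deriv (wfactor (n + 1)) 1)
      ((s n x - c) / (s n x - c)) := by
    rw [div_self hc']
    exact (differentiable_wfactor (n + 1) 1).hasDerivAt
  have hcomp : HasDerivAt (fun z => graphFactor s c n (x, z))
      (deriv (wfactor (n + 1)) 1 * (1 / (s n x - c))) (s n x) := hfactor.comp (s n x) hquot
  rw [hcomp.deriv]
  exact mul_ne_zero (deriv_wfactor_one_ne_zero _) (one_div_ne_zero hc')

variable [TopologicalSpace X] {U : Set X}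

lemma continuousOn_sub_div_sub (hs : ContinuousOn (s n) U) (hc : ∀ x ∈ U, s n x ≠ c) :
    ContinuousOn (fun q : X × ℂ => (q.2 - c) / (s n q.1 - c)) (U ×ˢ Set.univ) :=
  (continuousOn_snd.sub continuousOn_const).div
    ((hs.comp continuousOn_fst fun _ hq => hq.1).sub continuousOn_const)
    fun q hq => sub_ne_zero.2 (hc q.1 hq.1)

lemma continuousOn_graphFactor (hs : ContinuousOn (s n) U) (hc : ∀ x ∈ U, s n x ≠ c) :
    ContinuousOn (graphFactor s c n) (U ×ˢ Set.univ) :=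
  (differentiable_wfactor (n + 1)).continuous.comp_continuousOn (continuousOn_sub_div_sub hs hc)

lemma tendsto_sub_div_sub_zero (hx : Tendsto (Function.uncurry s) (atTop ×ˢ 𝓝[U] x) (cocompact ℂ))
    (z : ℂ) :
    Tendsto (fun r : ℕ × X × ℂ => (r.2.2 - c) / (s r.1 r.2.1 - c))
      (atTop ×ˢ 𝓝[U ×ˢ Set.univ] (x, z)) (𝓝 0) := by
  rw [nhdsWithin_prod_eq, nhdsWithin_univ]
  have hnum : Tendsto (fun r : ℕ × X × ℂ => r.2.2 - c) (atTop ×ˢ 𝓝[U] x ×ˢ 𝓝 z) (𝓝 (z - c)) :=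
    (tendsto_snd.comp tendsto_snd).sub_const c
  have hden : Tendsto (fun r : ℕ × X × ℂ => s r.1 r.2.1 - c) (atTop ×ˢ 𝓝[U] x ×ˢ 𝓝 z)
      (cocompact ℂ) :=
    ((Homeomorph.subRight c).isClosedEmbedding.tendsto_cocompact.comp hx).comp
      (tendsto_fst.prodMk (tendsto_fst.comp tendsto_snd))
  rw [← Metric.cobounded_eq_cocompact] at hden
  simpa only [div_eq_mul_inv, mul_zero, Function.comp_def] using
    hnum.mul (tendsto_inv₀_cobounded.comp hden)

theorem locallyNormallyMultipliableOn_graphFactor (hs : ∀ n, ContinuousOn (s n) U)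
    (hc : ∀ x ∈ U, ∀ n, s n x ≠ c)
    (hinf : ∀ x ∈ U, Tendsto (Function.uncurry s) (atTop ×ˢ 𝓝[U] x) (cocompact ℂ)) :
    LocallyNormallyMultipliableOn (graphFactor s c) (U ×ˢ Set.univ) :=
  locallyNormallyMultipliableOn_wfactor Nat.le_succ
    (fun n => continuousOn_sub_div_sub (hs n) fun x hx => hc x hx n)
    fun q hq => tendsto_sub_div_sub_zero (hinf q.1 hq.1) q.2

end graphFactor

lemma tendsto_cocompact_of_forall_not_mapClusterPt {α Y : Type*} [TopologicalSpace Y]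
    {l : Filter α} {g : α → Y} (h : ∀ y, ¬MapClusterPt y l g) : Tendsto g l (cocompact Y) := by
  refine (hasBasis_cocompact.tendsto_right_iff).2 fun K hK => ?_
  by_contra hfreq
  obtain ⟨y, -, hy⟩ := hK.exists_mapClusterPt_of_frequently
    ((not_eventually.1 hfreq).mono fun _ => not_not.1)
  exact h y hy

section Sections

variable {ι X Y : Type*} [TopologicalSpace X] [TopologicalSpace Y] {E : Set (X × Y)} {U : Set X}
  {s : ι → X → Y} {x₀ : X}

lemma eventually_sections_notMem_nhds (hEclosed : IsClosed E)
    (hsE : ∀ x ∈ U, ∀ i, (x, s i x) ∈ E) {y : Y} (hy : (x₀, y) ∉ E) :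
    ∃ Q ∈ 𝓝 y, ∀ᶠ x in 𝓝[U] x₀, ∀ i, s i x ∉ Q := by
  obtain ⟨P, hP, Q, hQ, hPQ⟩ := mem_nhds_prod_iff.1 (hEclosed.isOpen_compl.mem_nhds hy)
  refine ⟨Q, hQ, ?_⟩
  filter_upwards [mem_nhdsWithin_of_mem_nhds hP, self_mem_nhdsWithin] with x hxP hxU i hi
  exact hPQ ⟨hxP, hi⟩ (hsE x hxU i)

lemma exists_nhds_injOn_fst (hE : IsLocallyInjective fun e : E => e.1.1) {y : Y}
    (hy : (x₀, y) ∈ E) :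
    ∃ P ∈ 𝓝 x₀, ∃ Q ∈ 𝓝 y, Set.InjOn Prod.fst (P ×ˢ Q ∩ E) := by
  obtain ⟨O, hO, hyO, hinjO⟩ := hE ⟨(x₀, y), hy⟩
  obtain ⟨O', hO', rfl⟩ := isOpen_induced_iff.1 hO
  obtain ⟨P, hP, Q, hQ, hPQ⟩ := mem_nhds_prod_iff.1 (hO'.mem_nhds hyO)
  refine ⟨P, hP, Q, hQ, fun a ha b hb hab => ?_⟩
  exact congrArg Subtype.val (@hinjO ⟨a, ha.2⟩ (hPQ ha.1) ⟨b, hb.2⟩ (hPQ hb.1) hab)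

lemma eventually_other_sections_notMem_nhds (hE : IsLocallyInjective fun e : E => e.1.1)
    (hsE : ∀ x ∈ U, ∀ i, (x, s i x) ∈ E) (hinj : ∀ x ∈ U, Function.Injective fun i => s i x)
    {k : ι} (hs : ContinuousWithinAt (s k) U x₀) (hx₀ : x₀ ∈ U) :
    ∃ Q ∈ 𝓝 (s k x₀), ∀ᶠ x in 𝓝[U] x₀, ∀ i ≠ k, s i x ∉ Q := by
  obtain ⟨P, hP, Q, hQ, hPQ⟩ := exists_nhds_injOn_fst hE (hsE x₀ hx₀ k)
  refine ⟨Q, hQ, ?_⟩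
  filter_upwards [mem_nhdsWithin_of_mem_nhds hP, self_mem_nhdsWithin, hs hQ]
    with x hxP hxU hkQ i hik hiQ
  have same_point : (x, s i x) = (x, s k x) :=
    hPQ ⟨⟨hxP, hiQ⟩, hsE x hxU i⟩ ⟨⟨hxP, hkQ⟩, hsE x hxU k⟩ rfl
  exact hik (hinj x hxU (congrArg Prod.snd same_point))

theorem tendsto_sections_cocompact (hEclosed : IsClosed E)
    (hE : IsLocallyInjective fun e : E => e.1.1) (hs : ∀ i, ContinuousOn (s i) U)
    (hinj : ∀ x ∈ U, Function.Injective fun i => s i x)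
    (hgraph : ∀ x ∈ U, ∀ y, (x, y) ∈ E ↔ ∃ i, y = s i x) (hx₀ : x₀ ∈ U) :
    Tendsto (Function.uncurry s) (cofinite ×ˢ 𝓝[U] x₀) (cocompact Y) := by
  have hsE (x : X) (hx : x ∈ U) (i : ι) : (x, s i x) ∈ E := (hgraph x hx _).2 ⟨i, rfl⟩
  have avoids (y : Y) : ∃ Q ∈ 𝓝 y, ∀ᶠ q in cofinite ×ˢ 𝓝[U] x₀, s q.1 q.2 ∉ Q := by
    by_cases hy : (x₀, y) ∈ E
    · obtain ⟨k, rfl⟩ := (hgraph x₀ hx₀ y).1 hy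
      obtain ⟨Q, hQ, hne⟩ := eventually_other_sections_notMem_nhds hE hsE hinj (hs k x₀ hx₀) hx₀
      refine ⟨Q, hQ, ?_⟩
      filter_upwards [(eventually_cofinite_ne k).prod_mk hne] with q hq using hq.2 q.1 hq.1
    · obtain ⟨Q, hQ, hne⟩ := eventually_sections_notMem_nhds hEclosed hsE hy
      exact ⟨Q, hQ, (tendsto_snd.eventually hne).mono fun q hq => hq q.1⟩
  refine tendsto_cocompact_of_forall_not_mapClusterPt fun y hy => ?_
  obtain ⟨Q, hQ, hne⟩ := avoids y
  exact (hy.frequently hQ) hne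

end Sections

theorem local_weierstrass_realization_general {X : Type*} [TopologicalSpace X]
    {E : Set (X × ℂ)} (hEclosed : IsClosed E) (hE : IsLocallyInjective fun e : E => e.1.1)
    {U : Set X} {s : ℕ → X → ℂ} (hscont : ∀ n, ContinuousOn (s n) U)
    (hinj : ∀ x ∈ U, Function.Injective fun n => s n x)
    (hgraph : ∀ x ∈ U, ∀ z : ℂ, (x, z) ∈ E ↔ ∃ n, z = s n x)
    {c : ℂ} (hc : ∀ x ∈ U, ∀ n, s n x ≠ c) :
    ∃ F : X → ℂ → ℂ,
      TendstoLocallyUniformlyOn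
        (fun m : ℕ => fun p : X × ℂ =>
          ∏ n ∈ Finset.range m, wfactor (n + 1) ((p.2 - c) / (s n p.1 - c)))
        (fun p : X × ℂ => F p.1 p.2) atTop (U ×ˢ (Set.univ : Set ℂ)) ∧
      ContinuousOn (fun p : X × ℂ => F p.1 p.2) (U ×ˢ (Set.univ : Set ℂ)) ∧
      (∀ x ∈ U, Differentiable ℂ (F x)) ∧
      (∀ x ∈ U, ∀ z : ℂ, F x z = 0 ↔ ∃ n, z = s n x) ∧
      (∀ x ∈ U, ∀ n, deriv (F x) (s n x) ≠ 0) := by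
  have hnormal : LocallyNormallyMultipliableOn (graphFactor s c) (U ×ˢ Set.univ) :=
    locallyNormallyMultipliableOn_graphFactor hscont hc fun x hx =>
      Nat.cofinite_eq_atTop ▸ tendsto_sections_cocompact hEclosed hE hscont hinj hgraph hx
  have hcont (n : ℕ) : ContinuousOn (graphFactor s c n) (U ×ˢ Set.univ) :=
    continuousOn_graphFactor (hscont n) fun x hx => hc x hx n
  have hslice (x : X) (hx : x ∈ U) :
      LocallyNormallyMultipliableOn (fun n z => graphFactor s c n (x, z)) Set.univ :=
    hnormal.comp_continuousOn (by fun_prop) fun _ _ => ⟨hx, trivial⟩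
  have hdiff (x : X) (n : ℕ) : DifferentiableOn ℂ (fun z => graphFactor s c n (x, z)) Set.univ :=
    (differentiable_graphFactor s c n x).differentiableOn
  refine ⟨fun x z => ∏' n, graphFactor s c n (x, z),
    (hnormal.hasProdLocallyUniformlyOn hcont).tendstoLocallyUniformlyOn_finsetRange,
    hnormal.continuousOn_tprod hcont,
    fun x hx => ?_, fun x hx z => ?_, fun x hx n => ?_⟩
  · exact differentiableOn_univ.1 ((hslice x hx).differentiableOn_tprod isOpen_univ (hdiff x))
  · simp only [(hslice x hx).tprod_eq_zero_iff trivial, graphFactor_eq_zero_iff (hc x hx _)]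
  · exact (hslice x hx).deriv_tprod_ne_zero isOpen_univ (hdiff x) trivial
      ((graphFactor_eq_zero_iff (hc x hx n)).2 rfl) (deriv_graphFactor_ne_zero (hc x hx n))
      fun m hmn hm => hmn (hinj x hx ((graphFactor_eq_zero_iff (hc x hx m)).1 hm).symm)

/-- Local Weierstrass products: let `E ⊆ X × ℂ` be closed with the first projection
restricting to a covering map of `X`, and over an open `U ⊆ X` let `E` be the disjoint
union of the graphs of continuous `s_n : U → ℂ` (`n ≥ 1`, indexed here by `n : ℕ` with
`s n` representing `s_{n+1}`), avoiding a constant `c`.  Then the products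
`F_U(x,z) = ∏_{n≥1} E_n((z-c)/(s_n(x)-c))` converge locally uniformly on `U × ℂ` to a
continuous function, entire in `z` for each `x ∈ U`, whose zeros in `z` are exactly the
`s_n(x)` and are all simple. -/
theorem local_weierstrass_realization (X : Type*) [TopologicalSpace X]
    (E : Set (X × ℂ)) (hEclosed : IsClosed E)
    (hcov : IsCoveringMap (fun e : E => e.1.1))
    (hsurj : Function.Surjective (fun e : E => e.1.1))
    (U : Set X) (hU : IsOpen U) (s : ℕ → X → ℂ)
    (hscont : ∀ n, ContinuousOn (s n) U)
    (hdisj : ∀ x ∈ U, ∀ n m : ℕ, n ≠ m → s n x ≠ s m x)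
    (hgraph : ∀ x ∈ U, ∀ z : ℂ, (x, z) ∈ E ↔ ∃ n, z = s n x)
    (c : ℂ) (hc : ∀ x ∈ U, ∀ n, s n x ≠ c) :
    ∃ F : X → ℂ → ℂ,
      TendstoLocallyUniformlyOn
        (fun m : ℕ => fun p : X × ℂ =>
          ∏ n ∈ Finset.range m, wfactor (n + 1) ((p.2 - c) / (s n p.1 - c)))
        (fun p : X × ℂ => F p.1 p.2) atTop (U ×ˢ (Set.univ : Set ℂ)) ∧
      ContinuousOn (fun p : X × ℂ => F p.1 p.2) (U ×ˢ (Set.univ : Set ℂ)) ∧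
      (∀ x ∈ U, Differentiable ℂ (F x)) ∧
      (∀ x ∈ U, ∀ z : ℂ, F x z = 0 ↔ ∃ n, z = s n x) ∧
      (∀ x ∈ U, ∀ n, deriv (F x) (s n x) ≠ 0) :=
  local_weierstrass_realization_general hEclosed hcov.isLocalHomeomorph.isLocallyInjective hscont
    (fun x hx n m => not_imp_not.1 (hdisj x hx n m)) hgraph hc
end
end
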